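/- Let A = (a_{ij}) be a d×n integer matrix of rank d with nonzero columns a₁,…,aₙ ∈ ℤ^d such that ℕA is pointed and ℤA = ℤ^d, and let L ∈ ℚⁿ be a weight vector. If ℂ[x₁,…,xₙ,∂₁,…,∂ₙ]/(in_L(I_A)·ℂ[x,∂]) is Cohen–Macaulay, then the Euler operators E₁,…,E_d, E_i = Σ_{j=1}^n a_{ij} x_j ∂_j, form a regular sequence on ℂ[x₁,…,xₙ,∂₁,…,∂ₙ]/(in_L(I_A)·ℂ[x,∂]). -/

import Mathlib

/-!
Write `J = in_L(I_A)·ℂ[x,∂]` and `T = ℂ[x,∂]/J`.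

Since `ℕA` is pointed and the columns are nonzero, Gordan's alternative gives an integral
functional `h` with `h · a_j > 0` for all `j` (`exists_pos_grading`). With `deg ∂_j = h · a_j` and
`deg x_j = N - h · a_j` for a large `N`, all variables have positive degree, `J` is homogeneous and
the Euler operators are homogeneous of degree `N`. Weak regularity on `T` can therefore be tested
in the local ring `R` of `T` at the origin (`isWeaklyRegular_quotient_of_localization`), and the
ideal `(E₁, …, E_d)` is proper because it vanishes at the origin.

The argument in `R` compares two dimensions.

* The dimension, hence by hypothesis the depth, of `R` is at least `n + d`
  (`le_height_originIdeal`). A vertex `c` of the polyhedron `c · a_j ≤ L_j` has a spanning set of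
  tight columns. Setting the other `∂_j` to zero gives a face torus on whose closure `J` vanishes
  (`faceMap_initialForm`), and subspaces of a hyperplane in `ℚ^d × ℚ^n`, the rational character
  space of this torus times the torus of the `x_j`, give a chain of `n + d` primes below the origin.
* The locus in `R` where all the Euler operators vanish has dimension at most `n`
  (`coheight_le_of_euler_mem`). On an integral subscheme of it, let `B` index a basis among the
  columns with `∂_j ≠ 0`. The binomials make every `∂_j` algebraic over the `∂_b` with `b ∈ B`,
  and the Euler operators then make each `x_b` algebraic over these and the `x_j` with `j ∉ B`;
  that is `n` elements in all (`exists_isAlgebraic_adjoin`).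

So the `d` Euler operators cut the dimension down to `n` in a local ring of depth at least
`n + d`. Such elements form a regular sequence (`isWeaklyRegular_of_ringDepth`): by Ischebeck's
bound (`le_coheight_of_isAssociatedPrime`) every associated prime has dimension at least the depth,
so a zero divisor among them would leave a locus of too large a dimension, and dividing by a
nonzerodivisor lowers the range of vanishing `Ext` modules by one. Here `Ext(R/m, -)` is handled
through cocycles in `Hom(P, -)` for a fixed projective resolution `P` of the residue field.
-/

open MvPolynomial CategoryTheory

noncomputable section

/-- The set of columns of an integer matrix. -/
def cols {d n : ℕ} (A : Matrix (Fin d) (Fin n) ℤ) : Set (Fin d → ℤ) :=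
  Set.range fun j i => A i j

/-- The affine semigroup `ℕA` generated by the columns of `A` is pointed. -/
def IsPointed {d n : ℕ} (A : Matrix (Fin d) (Fin n) ℤ) : Prop :=
  ∀ v ∈ AddSubmonoid.closure (cols A),
    -v ∈ AddSubmonoid.closure (cols A) → v = 0

/-- The toric ideal `I_A ⊆ ℂ[∂₁,…,∂ₙ]`, generated by the binomials
`∂^u - ∂^v` with `Au = Av`. -/
def toricIdeal {d n : ℕ} (A : Matrix (Fin d) (Fin n) ℤ) :
    Ideal (MvPolynomial (Fin n) ℂ) :=
  Ideal.span { f | ∃ u v : Fin n →₀ ℕ,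
    A.mulVec (fun j => (u j : ℤ)) = A.mulVec (fun j => (v j : ℤ)) ∧
    f = monomial u 1 - monomial v 1 }

/-- The `L`-weight of an exponent vector. -/
def wt {n : ℕ} (L : Fin n → ℚ) (u : Fin n →₀ ℕ) : ℚ := ∑ j, L j * (u j : ℚ)

/-- The `L`-initial form of a polynomial: the sum of its terms of maximal `L`-weight. -/
def initialForm {n : ℕ} (L : Fin n → ℚ) (f : MvPolynomial (Fin n) ℂ) :
    MvPolynomial (Fin n) ℂ :=
  ∑ u ∈ f.support.filter fun u => ∀ v ∈ f.support, wt L v ≤ wt L u,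
    monomial u (f.coeff u)

/-- The `L`-initial ideal `in_L(I)` of an ideal `I ⊆ ℂ[∂₁,…,∂ₙ]`. -/
def initialIdeal {n : ℕ} (L : Fin n → ℚ) (I : Ideal (MvPolynomial (Fin n) ℂ)) :
    Ideal (MvPolynomial (Fin n) ℂ) :=
  Ideal.span { g | ∃ f ∈ I, f ≠ 0 ∧ g = initialForm L f }

/-- The depth of a Noetherian local ring `R`, i.e. `inf { i | Ext^i_R(R/m, R) ≠ 0 }`. -/
def ringDepth (R : Type) [CommRing R] [IsLocalRing R] : ℕ∞ :=
  sInf { i : ℕ∞ | ∃ m : ℕ, i = m ∧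
    Nontrivial (((Ext R (ModuleCat.{0} R) m).obj
        (Opposite.op (ModuleCat.of R (R ⧸ IsLocalRing.maximalIdeal R)))).obj
      (ModuleCat.of R R)) }

/-- A commutative ring `T` is Cohen–Macaulay if for every prime ideal `p`, the
localization `T_p` satisfies `depth = Krull dimension`. -/
def IsCohenMacaulayRing (T : Type) [CommRing T] : Prop :=
  ∀ (p : Ideal T) [p.IsPrime],
    (ringDepth (Localization.AtPrime p) : WithBot ℕ∞) =
      ringKrullDim (Localization.AtPrime p)

/-- The Euler operator `E_i = ∑ⱼ a_{ij} xⱼ ∂ⱼ` as an element of `ℂ[x,∂]`,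
where `x_j = X (Sum.inl j)` and `∂_j = X (Sum.inr j)`. -/
def eulerXD {d n : ℕ} (A : Matrix (Fin d) (Fin n) ℤ) (i : Fin d) :
    MvPolynomial (Fin n ⊕ Fin n) ℂ :=
  ∑ j, (A i j : MvPolynomial (Fin n ⊕ Fin n) ℂ) * X (Sum.inl j) * X (Sum.inr j)

/-- The inclusion `ℂ[∂] → K[∂]`, for `K` an algebra over `ℂ[x₁,…,xₙ]`
(in practice `K = ℂ(x₁,…,xₙ)`), sending `∂ⱼ` to `∂ⱼ`. -/
def toFracPoly (n : ℕ) (K : Type) [CommRing K] [Algebra (MvPolynomial (Fin n) ℂ) K] :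
    MvPolynomial (Fin n) ℂ →+* MvPolynomial (Fin n) K :=
  MvPolynomial.map ((algebraMap (MvPolynomial (Fin n) ℂ) K).comp (C : ℂ →+* _))

/-- The Euler operator `E_i = ∑ⱼ a_{ij} xⱼ ∂ⱼ` as an element of `K[∂]`
(in practice `K = ℂ(x₁,…,xₙ)`, and the `xⱼ` act as scalars). -/
def eulerFrac {d n : ℕ} (A : Matrix (Fin d) (Fin n) ℤ) (K : Type) [CommRing K]
    [Algebra (MvPolynomial (Fin n) ℂ) K] (i : Fin d) : MvPolynomial (Fin n) K :=
  ∑ j, C (algebraMap (MvPolynomial (Fin n) ℂ) K (X j)) *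
    (A i j : MvPolynomial (Fin n) K) * X j

/-- The extension `in_L(I_A)·ℂ[x,∂]` of the initial ideal of the toric ideal to
`ℂ[x,∂]`, where `x_j = X (Sum.inl j)` and `∂_j = X (Sum.inr j)`. -/
def grIdealXD {d n : ℕ} (A : Matrix (Fin d) (Fin n) ℤ) (L : Fin n → ℚ) :
    Ideal (MvPolynomial (Fin n ⊕ Fin n) ℂ) :=
  Ideal.map (rename (Sum.inr : Fin n → Fin n ⊕ Fin n)) (initialIdeal L (toricIdeal A))

/-- The extension `in_L(I_A)·K[∂]` of the initial ideal of the toric ideal to `K[∂]`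
(in practice `K = ℂ(x₁,…,xₙ)`). -/
def grIdealFrac {d n : ℕ} (A : Matrix (Fin d) (Fin n) ℤ) (L : Fin n → ℚ) (K : Type)
    [CommRing K] [Algebra (MvPolynomial (Fin n) ℂ) K] : Ideal (MvPolynomial (Fin n) K) :=
  Ideal.map (toFracPoly n K) (initialIdeal L (toricIdeal A))

/-! ### Depth and regular sequences in Noetherian local rings -/

section Depth

open scoped Pointwise

variable {R : Type} [CommRing R]

/-- For a projective resolution `P`, the assertion that the `i`-th cohomology of the complex
`Hom(P, M)` vanishes.  The truncated `i - 1` is harmless, since `P.d 0 0 = 0`. -/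
def CohVanishes {k : ModuleCat.{0} R} (P : ProjectiveResolution k) (M : ModuleCat.{0} R)
    (i : ℕ) : Prop :=
  ∀ f : P.complex.X i ⟶ M, P.complex.d (i + 1) i ≫ f = 0 →
    ∃ g : P.complex.X (i - 1) ⟶ M, P.complex.d i (i - 1) ≫ g = f

lemma cohVanishes_of_subsingleton_ext {k : ModuleCat.{0} R} (P : ProjectiveResolution k)
    (M : ModuleCat.{0} R) (i : ℕ)
    (h : Subsingleton (((Ext R (ModuleCat.{0} R) i).obj (Opposite.op k)).obj M)) :
    CohVanishes P M i := by
  have h0 : Limits.IsZero (((Ext R (ModuleCat.{0} R) i).obj (Opposite.op k)).obj M) :=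
    ModuleCat.isZero_of_subsingleton _
  have h1 := h0.of_iso (P.isoExt i M).symm
  rw [← HomologicalComplex.exactAt_iff_isZero_homology,
    HomologicalComplex.exactAt_iff' _ (i - 1) i (i + 1) (by cases i <;> simp) (by simp),
    ShortComplex.moduleCat_exact_iff] at h1
  intro f hf
  obtain ⟨g, hg⟩ := h1 f hf
  exact ⟨g, hg⟩

/-- The part of the long exact sequence of `0 → X₁ → X₂ → X₃ → 0` giving vanishing for `X₃`. -/
lemma CohVanishes.of_shortExact {k : ModuleCat.{0} R} {P : ProjectiveResolution k}
    {S : ShortComplex (ModuleCat.{0} R)} (hS : S.ShortExact) {i : ℕ}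
    (h0 : CohVanishes P S.X₂ i) (h1 : CohVanishes P S.X₁ (i + 1)) : CohVanishes P S.X₃ i := by
  intro f hf
  have := hS.mono_f
  have := hS.epi_g
  let g : P.complex.X i ⟶ S.X₂ := Projective.factorThru f S.g
  have hg : g ≫ S.g = f := Projective.factorThru_comp f S.g
  have h2 : (P.complex.d (i + 1) i ≫ g) ≫ S.g = 0 := by
    rw [Category.assoc, hg]; exact hf
  let u : P.complex.X (i + 1) ⟶ S.X₁ := hS.exact.lift _ h2
  have hu : u ≫ S.f = P.complex.d (i + 1) i ≫ g := hS.exact.lift_f _ h2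
  obtain ⟨v, hv⟩ := h1 u (by
    rw [← cancel_mono S.f, Category.assoc, hu]; simp)
  change P.complex.X i ⟶ S.X₁ at v
  change P.complex.d (i + 1) i ≫ v = u at hv
  obtain ⟨l, hl⟩ := h0 (g - v ≫ S.f) (by
    rw [Preadditive.comp_sub, ← Category.assoc, hv, hu, sub_self])
  refine ⟨l ≫ S.g, ?_⟩
  rw [← Category.assoc, hl, Preadditive.sub_comp, Category.assoc, S.zero, hg]
  simp

lemma CohVanishes.quotSMulTop {k : ModuleCat.{0} R} {P : ProjectiveResolution k}
    {M : Type} [AddCommGroup M] [Module R M] {r : R} (hr : IsSMulRegular M r) {i : ℕ}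
    (h0 : CohVanishes P (ModuleCat.of R M) i) (h1 : CohVanishes P (ModuleCat.of R M) (i + 1)) :
    CohVanishes P (ModuleCat.of R (QuotSMulTop r M)) i :=
  CohVanishes.of_shortExact (S := ModuleCat.smulShortComplex (ModuleCat.of R M) r)
    hr.smulShortComplex_shortExact h0 h1

/-- Vanishing in degree `0` says that `Hom(k, M) = 0`. -/
lemma eq_zero_of_cohVanishes_zero {k M : ModuleCat.{0} R} {P : ProjectiveResolution k}
    (h : CohVanishes P M 0) (a : k ⟶ M) : a = 0 := by
  let e : P.complex.X 0 ⟶ k := P.π.f 0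
  have he : P.complex.d 1 0 ≫ e = 0 := P.complex_d_comp_π_f_zero
  have : Epi e := inferInstanceAs (Epi (P.π.f 0))
  obtain ⟨g, hg⟩ := h (e ≫ a) (by rw [← Category.assoc, he, Limits.zero_comp])
  have hz : P.complex.d 0 (0 - 1) = 0 := P.complex.shape _ _ (by simp)
  rw [hz, Limits.zero_comp] at hg
  rw [← cancel_epi e, ← hg, Limits.comp_zero]

lemma subsingleton_hom_of_cohVanishes_zero {N M : Type} [AddCommGroup M] [Module R M]
    [AddCommGroup N] [Module R N] {P : ProjectiveResolution (ModuleCat.of R N)}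
    (h : CohVanishes P (ModuleCat.of R M) 0) : Subsingleton (N →ₗ[R] M) := by
  refine ⟨fun a b ↦ ?_⟩
  have key (a : N →ₗ[R] M) : a = 0 :=
    congrArg ModuleCat.Hom.hom (eq_zero_of_cohVanishes_zero h (ModuleCat.ofHom a))
  rw [key a, key b]

open Order in
/-- The dimension of `R/p` is the coheight of `p` in the spectrum, the form in which dimensions of
closed subsets are measured in the sequel. -/
lemma coheight_eq_ringKrullDim_quotient (p : PrimeSpectrum R) :
    (coheight p : WithBot ℕ∞) = ringKrullDim (R ⧸ p.asIdeal) := by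
  rw [ringKrullDim_quotient, coheight_eq_krullDim_Ici]
  refine krullDim_eq_of_orderIso (OrderIso.setCongr _ _ ?_)
  ext q
  rfl

variable [IsLocalRing R] [IsNoetherianRing R]

/-- Ischebeck's bound for `N = R/p`: if `Ext^i(k, M) = 0` for all `i < D`, then
`D ≤ dim R/p` for every associated prime `p` of `M`. -/
lemma le_coheight_of_isAssociatedPrime
    (P : ProjectiveResolution (ModuleCat.of R (R ⧸ IsLocalRing.maximalIdeal R))) (D : ℕ) :
    ∀ (M : Type) [AddCommGroup M] [Module R M] [Module.Finite R M],
      (∀ i < D, CohVanishes P (ModuleCat.of R M) i) →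
      ∀ p : PrimeSpectrum R, IsAssociatedPrime p.asIdeal M → (D : ℕ∞) ≤ Order.coheight p := by
  induction D with
  | zero => intros; simp
  | succ D ih =>
    intro M _ _ _ hM p hp
    have hsub := subsingleton_hom_of_cohVanishes_zero (hM 0 (by omega))
    rw [IsSMulRegular.subsingleton_linearMap_iff, Ideal.annihilator_quotient] at hsub
    obtain ⟨r, hrm, hr⟩ := hsub
    have hq := ih (QuotSMulTop r M) fun i hi ↦
      (hM i (by omega)).quotSMulTop hr (hM (i + 1) (by omega))
    have hrp : r ∉ p.asIdeal := by
      have := biUnion_associatedPrimes_eq_compl_regular M (R := R)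
      intro hmem
      have h1 : r ∈ ⋃ p ∈ associatedPrimes R M, (p : Set R) :=
        Set.mem_iUnion₂_of_mem hp hmem
      rw [this] at h1
      exact h1 hr
    -- by Nakayama, the elements of `M` killed by `p` do not all lie in `rM`
    obtain ⟨y, hyp, hyr⟩ : ∃ y : M, (∀ a ∈ p.asIdeal, a • y = 0) ∧
        y ∉ (r • (⊤ : Submodule R M)) := by
      by_contra! hcon
      let U : Submodule R M :=
        { carrier := {y | ∀ a ∈ p.asIdeal, a • y = 0}
          add_mem' := fun ha hb c hc ↦ by rw [smul_add, ha c hc, hb c hc, add_zero]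
          zero_mem' := fun a _ ↦ smul_zero a
          smul_mem' := fun c y hy a ha ↦ by rw [smul_comm, hy a ha, smul_zero] }
      have hU : U ≤ IsLocalRing.maximalIdeal R • U := by
        intro y hy
        obtain ⟨z, -, hz⟩ := (Submodule.mem_smul_pointwise_iff_exists _ _ _).1 (hcon y hy)
        rw [← hz]
        refine Submodule.smul_mem_smul hrm fun a ha ↦ hr ?_
        have := hy a ha
        rw [← hz] at this
        change r • a • z = r • (0 : M)
        rw [smul_zero, smul_comm, this]
      have hU0 : U = ⊥ := Submodule.eq_bot_of_le_smul_of_le_jacobson_bot _ U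
        (IsNoetherian.noetherian U) hU (IsLocalRing.maximalIdeal_le_jacobson _)
      rw [isAssociatedPrime_iff] at hp
      obtain ⟨hp1, x, hx⟩ := hp
      have hxU : x ∈ U := fun a ha ↦ by
        rw [hx, Submodule.mem_colon_singleton, Submodule.mem_bot] at ha
        exact ha
      rw [hU0, Submodule.mem_bot] at hxU
      apply hp1.ne_top
      rw [hx, hxU, Ideal.eq_top_iff_one, Submodule.mem_colon_singleton]
      simp
    obtain ⟨q, hqM, hqy⟩ := exists_le_isAssociatedPrime_of_isNoetherianRing R
      (Submodule.Quotient.mk (p := r • (⊤ : Submodule R M)) y)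
      (by rwa [Ne, Submodule.Quotient.mk_eq_zero])
    have hqp := hqM.isPrime
    have hle := hq ⟨q, hqp⟩ hqM
    have hlt : p < (⟨q, hqp⟩ : PrimeSpectrum R) := by
      refine lt_of_le_not_ge (fun a ha ↦ hqy ?_) fun hge ↦ hrp (hge (hqy ?_))
      · rw [Submodule.mem_colon_singleton, ← Submodule.Quotient.mk_smul, hyp a ha]; simp
      · rw [Submodule.mem_colon_singleton, ← Submodule.Quotient.mk_smul, Submodule.mem_bot,
          Submodule.Quotient.mk_eq_zero]
        exact Submodule.smul_mem_pointwise_smul _ _ _ trivial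
    calc ((D + 1 : ℕ) : ℕ∞) = (D : ℕ∞) + 1 := by push_cast; rfl
      _ ≤ Order.coheight (⟨q, hqp⟩ : PrimeSpectrum R) + 1 := by gcongr
      _ ≤ Order.coheight p := Order.coheight_add_one_le hlt

/-- A prime can be enlarged to contain one more element of the maximal ideal at the cost of losing
at most one from the dimension. -/
lemma exists_prime_mem_coheight_le (p : PrimeSpectrum R) {r : R}
    (hr : r ∈ IsLocalRing.maximalIdeal R) :
    ∃ q : PrimeSpectrum R, p ≤ q ∧ r ∈ q.asIdeal ∧
      Order.coheight p ≤ Order.coheight q + 1 := by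
  let A := R ⧸ p.asIdeal
  let r' : A := Ideal.Quotient.mk p.asIdeal r
  have hA : IsLocalRing A := IsLocalRing.of_surjective' (Ideal.Quotient.mk p.asIdeal)
    Ideal.Quotient.mk_surjective
  have hr' : r' ∈ IsLocalRing.maximalIdeal A := by
    rw [IsLocalRing.mem_maximalIdeal, mem_nonunits_iff]
    intro hu
    obtain ⟨b, hb⟩ := hu.exists_right_inv
    obtain ⟨b, rfl⟩ := Ideal.Quotient.mk_surjective b
    rw [← map_mul, ← map_one (Ideal.Quotient.mk p.asIdeal), Ideal.Quotient.eq] at hb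
    have h1 := IsLocalRing.le_maximalIdeal p.2.ne_top hb
    have h2 := (IsLocalRing.maximalIdeal R).sub_mem
      ((IsLocalRing.maximalIdeal R).mul_mem_right b hr) h1
    rw [sub_sub_cancel] at h2
    exact (Ideal.ne_top_iff_one _).1 (IsLocalRing.maximalIdeal.isMaximal R).ne_top h2
  have h1 := ringKrullDim_le_ringKrullDim_quotSMulTop_succ hr'
  let B := A ⧸ (r' • (⊤ : Ideal A))
  have hB : Nontrivial B := by
    refine Ideal.Quotient.nontrivial_iff.2 fun htop ↦ ?_
    have h2 : (1 : A) ∈ r' • (⊤ : Ideal A) := by rw [htop]; trivial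
    obtain ⟨b, -, hb⟩ := (Submodule.mem_smul_pointwise_iff_exists _ _ _).1 h2
    refine (Ideal.ne_top_iff_one _).1 (IsLocalRing.maximalIdeal.isMaximal A).ne_top ?_
    rw [← hb]
    exact Ideal.mul_mem_right b _ hr'
  have hBl : IsLocalRing B := IsLocalRing.of_surjective' (Ideal.Quotient.mk _)
    Ideal.Quotient.mk_surjective
  let f : R →+* B := (Ideal.Quotient.mk (r' • (⊤ : Ideal A))).comp (Ideal.Quotient.mk p.asIdeal)
  have hf : Function.Surjective f :=
    Ideal.Quotient.mk_surjective.comp Ideal.Quotient.mk_surjective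
  let l := LTSeries.longestOf (PrimeSpectrum B)
  have hl : ringKrullDim B = l.length := Order.krullDim_eq_length_of_finiteDimensionalOrder
  refine ⟨PrimeSpectrum.comap f l.head, ?_, ?_, ?_⟩
  · intro a ha
    change f a ∈ l.head.asIdeal
    have : f a = 0 := by simp [f, Ideal.Quotient.eq_zero_iff_mem.2 ha]
    rw [this]; exact zero_mem _
  · change f r ∈ l.head.asIdeal
    have : f r = 0 := by
      simp only [f, RingHom.comp_apply]
      rw [Ideal.Quotient.eq_zero_iff_mem]
      exact (Submodule.mem_smul_pointwise_iff_exists r' r' (⊤ : Ideal A)).2 ⟨1, trivial, mul_one _⟩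
    rw [this]; exact zero_mem _
  · have h2 : (l.length : ℕ∞) ≤ Order.coheight (PrimeSpectrum.comap f l.head) :=
      Order.length_le_coheight_head.trans (Order.coheight_le_coheight_apply_of_strictMono _
        (RingHom.strictMono_comap_of_surjective hf) _)
    rw [← coheight_eq_ringKrullDim_quotient, hl] at h1
    have h3 : Order.coheight p ≤ (l.length : ℕ∞) + 1 := by exact_mod_cast h1
    exact h3.trans (by gcongr)

/-- A prime of dimension at least `D` can be enlarged to contain `s` further elements of the
maximal ideal at the cost of losing at most `s` from the dimension. -/
lemma exists_prime_list_coheight_le (rs : List R) (hrs : ∀ r ∈ rs, r ∈ IsLocalRing.maximalIdeal R) :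
    ∀ p : PrimeSpectrum R, ∃ q : PrimeSpectrum R, p ≤ q ∧ (∀ r ∈ rs, r ∈ q.asIdeal) ∧
      Order.coheight p ≤ Order.coheight q + rs.length := by
  induction rs with
  | nil => exact fun p ↦ ⟨p, le_rfl, by simp, by simp⟩
  | cons r rs ih =>
    intro p
    obtain ⟨q, hpq, hrq, hq⟩ := exists_prime_mem_coheight_le p (hrs r (by simp))
    obtain ⟨q', hqq', hrsq', hq'⟩ := ih (fun s hs ↦ hrs s (by simp [hs])) q
    refine ⟨q', hpq.trans hqq', ?_, ?_⟩
    · simpa using ⟨hqq' hrq, hrsq'⟩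
    · calc _ ≤ Order.coheight q + 1 := hq
        _ ≤ (Order.coheight q' + rs.length) + 1 := by gcongr
        _ = _ := by simp [add_assoc]

/-- If `Ext^i(k, M) = 0` for `i < e + s` and cutting by `s` elements of the maximal ideal leaves
a support of dimension at most `e`, then those elements are a weakly regular sequence. -/
lemma isWeaklyRegular_of_cohVanishes
    (P : ProjectiveResolution (ModuleCat.of R (R ⧸ IsLocalRing.maximalIdeal R))) (e : ℕ)
    (rs : List R) (hrs : ∀ r ∈ rs, r ∈ IsLocalRing.maximalIdeal R) :
    ∀ (M : Type) [AddCommGroup M] [Module R M] [Module.Finite R M],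
      (∀ i < e + rs.length, CohVanishes P (ModuleCat.of R M) i) →
      (∀ q : PrimeSpectrum R, Module.annihilator R M ≤ q.asIdeal → (∀ r ∈ rs, r ∈ q.asIdeal) →
        Order.coheight q ≤ e) →
      RingTheory.Sequence.IsWeaklyRegular M rs := by
  induction rs with
  | nil => intros; exact RingTheory.Sequence.IsWeaklyRegular.nil R _
  | cons r rs ih =>
    intro M _ _ _ hM hdim
    have hreg : IsSMulRegular M r := by
      by_contra hr
      have h1 : r ∈ ⋃ p ∈ associatedPrimes R M, (p : Set R) := by
        rw [biUnion_associatedPrimes_eq_compl_regular]; exact hr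
      obtain ⟨p, hp, hrp⟩ := Set.mem_iUnion₂.1 h1
      have h2 := le_coheight_of_isAssociatedPrime P _ M hM ⟨p, hp.isPrime⟩ hp
      obtain ⟨q, hpq, hrsq, hq⟩ := exists_prime_list_coheight_le rs
        (fun s hs ↦ hrs s (by simp [hs])) ⟨p, hp.isPrime⟩
      have h3 := hdim q ((Submodule.annihilator_top (R := R) (M := M) ▸
        hp.annihilator_le).trans hpq) (by simpa using ⟨hpq hrp, hrsq⟩)
      have h4 : ((e + (rs.length + 1) : ℕ) : ℕ∞) ≤ ((e + rs.length : ℕ) : ℕ∞) := by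
        refine (h2.trans hq).trans ?_
        push_cast
        gcongr
      have := Nat.cast_le.1 h4
      omega
    rw [RingTheory.Sequence.isWeaklyRegular_cons_iff]
    refine ⟨hreg, ih (fun s hs ↦ hrs s (by simp [hs])) _ (fun i hi ↦ ?_) fun q hq hrsq ↦ ?_⟩
    · exact (hM i (by simp; omega)).quotSMulTop hreg (hM (i + 1) (by simp; omega))
    · refine hdim q (fun a ha ↦ hq ?_) ?_
      · exact (Submodule.mkQ (r • (⊤ : Submodule R M))).annihilator_le_of_surjective
          (Submodule.mkQ_surjective _) ha
      · have : r ∈ q.asIdeal := hq (by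
          rw [Module.mem_annihilator]
          intro m
          obtain ⟨m, rfl⟩ := Submodule.mkQ_surjective _ m
          rw [← map_smul, Submodule.mkQ_apply, Submodule.Quotient.mk_eq_zero]
          exact Submodule.smul_mem_pointwise_smul m r ⊤ trivial)
        simpa using ⟨this, hrsq⟩

/-- In a Noetherian local ring of depth at least `e + s`, any `s` elements of the maximal ideal
whose zero locus has dimension at most `e` form a weakly regular sequence. -/
lemma isWeaklyRegular_of_ringDepth (e : ℕ) (rs : List R)
    (hrs : ∀ r ∈ rs, r ∈ IsLocalRing.maximalIdeal R)
    (hdepth : ((e + rs.length : ℕ) : ℕ∞) ≤ ringDepth R)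
    (hdim : ∀ q : PrimeSpectrum R, (∀ r ∈ rs, r ∈ q.asIdeal) → Order.coheight q ≤ e) :
    RingTheory.Sequence.IsWeaklyRegular R rs := by
  let P := projectiveResolution (ModuleCat.of R (R ⧸ IsLocalRing.maximalIdeal R))
  refine isWeaklyRegular_of_cohVanishes P e rs hrs R (fun i hi ↦ ?_) fun q _ ↦ hdim q
  apply cohVanishes_of_subsingleton_ext
  by_contra hcon
  have h1 : ringDepth R ≤ i := sInf_le ⟨i, rfl, not_subsingleton_iff_nontrivial.1 hcon⟩
  have := Nat.cast_le.1 (hdepth.trans h1)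
  omega

end Depth

/-! ### Homogeneous elements and localization at the origin -/

section Graded

variable {τ : Type}

attribute [local instance] MvPolynomial.weightedGradedAlgebra

/-- Comparing parts of lowest degree: an element with nonzero constant term acts injectively on
the homogeneous elements of the quotient by a homogeneous ideal. -/
lemma mem_of_mul_mem_of_constantCoeff_ne_zero (ω : τ → ℕ) (hω : ∀ j, ω j ≠ 0)
    {I : Ideal (MvPolynomial τ ℂ)}
    (hI : I.IsHomogeneous (weightedHomogeneousSubmodule ℂ ω)) {s f : MvPolynomial τ ℂ} {k : ℕ}
    (hs : constantCoeff s ≠ 0) (hf : f ∈ weightedHomogeneousSubmodule ℂ ω k)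
    (h : s * f ∈ I) : f ∈ I := by
  have h1 := hI k h
  rw [DirectSum.coe_decompose_mul_of_right_mem_of_le _ hf le_rfl, Nat.sub_self] at h1
  have h2 : ((DirectSum.decompose (weightedHomogeneousSubmodule ℂ ω) s 0 :
      weightedHomogeneousSubmodule ℂ ω 0) : MvPolynomial τ ℂ) = C (constantCoeff s) := by
    have := weightedHomogeneousComponent_zero (w := ω) s hω
    rw [constantCoeff_eq, ← this]
    exact weightedDecomposition.decompose'_apply ℂ ω s 0
  rw [h2] at h1
  have h3 := I.mul_mem_left (C (constantCoeff s)⁻¹) h1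
  rwa [← mul_assoc, ← map_mul, inv_mul_cancel₀ hs, map_one, one_mul] at h3

lemma mul_weightedHomogeneousComponent_mem (ω : τ → ℕ) {I : Ideal (MvPolynomial τ ℂ)}
    (hI : I.IsHomogeneous (weightedHomogeneousSubmodule ℂ ω)) {e f : MvPolynomial τ ℂ} {N : ℕ}
    (he : e ∈ weightedHomogeneousSubmodule ℂ ω N) (h : e * f ∈ I) (k : ℕ) :
    e * weightedHomogeneousComponent ω k f ∈ I := by
  have h1 := hI (N + k) h
  rw [DirectSum.coe_decompose_mul_add_of_left_mem _ he] at h1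
  rw [← weightedDecomposition.decompose'_apply ℂ ω f k]
  exact h1

/-- For homogeneous elements and a homogeneous ideal (with positive weights), weak regularity can
be tested in a local ring at which only elements with nonzero constant term are inverted. -/
lemma isWeaklyRegular_quotient_of_localization (ω : τ → ℕ) (hω : ∀ j, ω j ≠ 0)
    {I : Ideal (MvPolynomial τ ℂ)} (hI : I.IsHomogeneous (weightedHomogeneousSubmodule ℂ ω))
    (es : List (MvPolynomial τ ℂ))
    (hes : ∀ e ∈ es, ∃ N, e ∈ weightedHomogeneousSubmodule ℂ ω N)
    (m : Ideal (MvPolynomial τ ℂ ⧸ I)) [m.IsPrime]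
    (hm : ∀ s, Ideal.Quotient.mk I s ∉ m → constantCoeff s ≠ 0)
    (h : RingTheory.Sequence.IsWeaklyRegular (Localization.AtPrime m)
      ((es.map (Ideal.Quotient.mk I)).map (algebraMap _ (Localization.AtPrime m)))) :
    RingTheory.Sequence.IsWeaklyRegular (MvPolynomial τ ℂ ⧸ I)
      (es.map (Ideal.Quotient.mk I)) := by
  refine ⟨fun i hi ↦ ?_⟩
  have hR := h.regular_mod_prev i (by simpa using hi)
  replace hR := (isSMulRegular_quotient_iff_mem_of_smul_mem _ _).1 hR
  refine (isSMulRegular_quotient_iff_mem_of_smul_mem _ _).2 ?_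
  rw [← List.map_take, ← Ideal.map_ofList, ← List.map_take, ← Ideal.map_ofList] at hR
  rw [← List.map_take, ← Ideal.map_ofList]
  simp only [List.getElem_map, smul_eq_mul, Ideal.mul_top] at hR ⊢
  set K := Ideal.ofList (es.take i)
  have hK : K.IsHomogeneous (weightedHomogeneousSubmodule ℂ ω) :=
    Ideal.homogeneous_span _ _ fun e he ↦ hes e (List.mem_of_mem_take he)
  have hKI : (K ⊔ I).IsHomogeneous (weightedHomogeneousSubmodule ℂ ω) := hK.sup hI
  have hmem (y : MvPolynomial τ ℂ) : Ideal.Quotient.mk I y ∈ K.map (Ideal.Quotient.mk I) ↔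
      y ∈ K ⊔ I := Ideal.mem_quotient_iff_mem_sup
  obtain ⟨N, hN⟩ := hes (es[i]'(by simpa using hi)) (List.getElem_mem _)
  intro x hx
  obtain ⟨x, rfl⟩ := Ideal.Quotient.mk_surjective x
  rw [← map_mul, hmem] at hx
  rw [hmem]
  refine (mem_iff_weightedHomogeneousComponent_mem ℂ ω hKI x).2 fun k ↦ ?_
  have h1 := mul_weightedHomogeneousComponent_mem ω hKI hN hx k
  have hy := weightedHomogeneousComponent_mem ω x k
  generalize weightedHomogeneousComponent ω k x = y at h1 hy ⊢
  have h2 := hR (algebraMap _ _ (Ideal.Quotient.mk I y)) (by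
    rw [← map_mul, ← map_mul]
    exact Ideal.mem_map_of_mem _ ((hmem _).2 h1))
  rw [IsLocalization.algebraMap_mem_map_algebraMap_iff m.primeCompl] at h2
  obtain ⟨s, hs, hsy⟩ := h2
  obtain ⟨s, rfl⟩ := Ideal.Quotient.mk_surjective s
  rw [← map_mul, hmem] at hsy
  exact mem_of_mul_mem_of_constantCoeff_ne_zero ω hω hKI (hm s hs) hy hsy

end Graded

/-! ### Homogeneity of the initial ideal and of the Euler operators -/

section InitialGraded

attribute [local instance] MvPolynomial.weightedGradedAlgebra

lemma coeff_initialForm {n : ℕ} (L : Fin n → ℚ) (f : MvPolynomial (Fin n) ℂ) (u : Fin n →₀ ℕ) :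
    (initialForm L f).coeff u =
      open Classical in if ∀ v ∈ f.support, wt L v ≤ wt L u then f.coeff u else 0 := by
  classical
  rw [initialForm, coeff_sum]
  simp only [coeff_monomial, Finset.sum_ite_eq', Finset.mem_filter, mem_support_iff]
  by_cases h : f.coeff u = 0
  · simp [h]
  · simp [h]

lemma initialForm_mem_weightedHomogeneousSubmodule {n : ℕ} (L : Fin n → ℚ) (ω : Fin n → ℕ)
    {f : MvPolynomial (Fin n) ℂ} {b : ℕ} (hf : f ∈ weightedHomogeneousSubmodule ℂ ω b) :
    initialForm L f ∈ weightedHomogeneousSubmodule ℂ ω b := by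
  intro u hu
  refine hf fun h0 ↦ hu ?_
  rw [coeff_initialForm, h0, ite_self]

/-- A weighted homogeneous component of an initial form is zero or again an initial form. -/
lemma weightedHomogeneousComponent_initialForm {n : ℕ} (L : Fin n → ℚ) (ω : Fin n → ℕ)
    (f : MvPolynomial (Fin n) ℂ) (b : ℕ)
    (h : weightedHomogeneousComponent ω b (initialForm L f) ≠ 0) :
    weightedHomogeneousComponent ω b f ≠ 0 ∧
      weightedHomogeneousComponent ω b (initialForm L f) =
        initialForm L (weightedHomogeneousComponent ω b f) := by
  classical
  obtain ⟨u, hu⟩ := ne_zero_iff.1 h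
  rw [coeff_weightedHomogeneousComponent, coeff_initialForm] at hu
  obtain ⟨hub, hu⟩ := ite_ne_right_iff.1 hu
  obtain ⟨humax, hu⟩ := ite_ne_right_iff.1 hu
  have hu' : coeff u (weightedHomogeneousComponent ω b f) ≠ 0 := by
    rwa [coeff_weightedHomogeneousComponent, if_pos hub]
  refine ⟨fun h0 ↦ hu' (by rw [h0, coeff_zero]), ?_⟩
  ext w
  rw [coeff_weightedHomogeneousComponent, coeff_initialForm, coeff_initialForm,
    coeff_weightedHomogeneousComponent]
  by_cases hw : Finsupp.weight ω w = b
  · rw [if_pos hw, if_pos hw]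
    congr 1
    refine propext ⟨fun H v hv ↦ H v ?_, fun H v hv ↦ (humax v hv).trans (H u ?_)⟩
    · rw [mem_support_iff, coeff_weightedHomogeneousComponent] at hv
      exact mem_support_iff.2 (ite_ne_right_iff.1 hv).2
    · exact mem_support_iff.2 hu'
  · rw [if_neg hw, if_neg hw, ite_self]

/-- For a homogeneous ideal, the initial forms of homogeneous elements suffice, so its initial
ideal is homogeneous too. -/
lemma initialIdeal_eq_span_homogeneous {n : ℕ} (L : Fin n → ℚ) (ω : Fin n → ℕ)
    {I : Ideal (MvPolynomial (Fin n) ℂ)}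
    (hI : I.IsHomogeneous (weightedHomogeneousSubmodule ℂ ω)) :
    initialIdeal L I = Ideal.span {g | ∃ f ∈ I, f ≠ 0 ∧
      (∃ b, f ∈ weightedHomogeneousSubmodule ℂ ω b) ∧ g = initialForm L f} := by
  apply le_antisymm
  · rw [initialIdeal, Ideal.span_le]
    rintro _ ⟨f, hf, hf0, rfl⟩
    refine (mem_iff_weightedHomogeneousComponent_mem ℂ ω
      (Ideal.homogeneous_span _ _ ?_) _).2 fun b ↦ ?_
    · rintro _ ⟨f, hf, hf0, ⟨b, hb⟩, rfl⟩
      exact ⟨b, initialForm_mem_weightedHomogeneousSubmodule L ω hb⟩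
    · by_cases h : weightedHomogeneousComponent ω b (initialForm L f) = 0
      · rw [h]; exact zero_mem _
      · obtain ⟨h1, h2⟩ := weightedHomogeneousComponent_initialForm L ω f b h
        rw [h2]
        exact Ideal.subset_span ⟨_, weightedHomogeneousComponent_mem_of_mem ℂ ω hI hf b, h1,
          ⟨b, weightedHomogeneousComponent_mem ω f b⟩, rfl⟩
  · refine Ideal.span_mono ?_
    rintro _ ⟨f, hf, hf0, -, rfl⟩
    exact ⟨f, hf, hf0, rfl⟩

variable {d n : ℕ} (A : Matrix (Fin d) (Fin n) ℤ)

lemma weight_eq_of_mulVec {h : Fin d → ℤ} {ω : Fin n → ℕ}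
    (hω : ∀ j, (ω j : ℤ) = ∑ i, h i * A i j) (u : Fin n →₀ ℕ) :
    ((Finsupp.weight ω u : ℕ) : ℤ) = ∑ i, h i * A.mulVec (fun j => (u j : ℤ)) i := by
  rw [Finsupp.weight_apply, Finsupp.sum_fintype _ _ (by simp)]
  push_cast
  simp only [Nat.cast_mul, hω, Matrix.mulVec, dotProduct, Finset.mul_sum,
    smul_eq_mul]
  rw [Finset.sum_comm]
  exact Finset.sum_congr rfl fun i _ ↦ Finset.sum_congr rfl fun j _ ↦ by ring

lemma toricIdeal_isHomogeneous {h : Fin d → ℤ} {ω : Fin n → ℕ}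
    (hω : ∀ j, (ω j : ℤ) = ∑ i, h i * A i j) :
    (toricIdeal A).IsHomogeneous (weightedHomogeneousSubmodule ℂ ω) := by
  refine Ideal.homogeneous_span _ _ ?_
  rintro _ ⟨u, v, huv, rfl⟩
  refine ⟨Finsupp.weight ω u, Submodule.sub_mem _ ?_ ?_⟩
  · exact isWeightedHomogeneous_monomial _ _ _ rfl
  · refine isWeightedHomogeneous_monomial _ _ _ ?_
    have := weight_eq_of_mulVec A hω u
    rw [huv, ← weight_eq_of_mulVec A hω v] at this
    exact_mod_cast this.symm

lemma rename_inr_mem_weightedHomogeneousSubmodule {ω : Fin n ⊕ Fin n → ℕ}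
    {f : MvPolynomial (Fin n) ℂ} {b : ℕ}
    (hf : f ∈ weightedHomogeneousSubmodule ℂ (fun j ↦ ω (Sum.inr j)) b) :
    rename (Sum.inr : Fin n → Fin n ⊕ Fin n) f ∈ weightedHomogeneousSubmodule ℂ ω b := by
  intro u hu
  obtain ⟨v, rfl, hv⟩ := coeff_rename_ne_zero _ _ _ hu
  rw [← hf hv, Finsupp.weight_apply, Finsupp.weight_apply,
    Finsupp.sum_mapDomain_index (by simp) (by simp [add_mul])]

/-- The ideal is homogeneous for any grading in which the degree of `∂_j` is an integral functional
of the column `a_j`; the degrees of the `x_j` are irrelevant. -/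
lemma grIdealXD_isHomogeneous (L : Fin n → ℚ) {h : Fin d → ℤ} {ω : Fin n ⊕ Fin n → ℕ}
    (hω : ∀ j, (ω (Sum.inr j) : ℤ) = ∑ i, h i * A i j) :
    (grIdealXD A L).IsHomogeneous (weightedHomogeneousSubmodule ℂ ω) := by
  rw [grIdealXD, initialIdeal_eq_span_homogeneous L _ (toricIdeal_isHomogeneous A hω),
    Ideal.map_span]
  refine Ideal.homogeneous_span _ _ ?_
  rintro _ ⟨_, ⟨f, hf, hf0, ⟨b, hb⟩, rfl⟩, rfl⟩
  exact ⟨b, rename_inr_mem_weightedHomogeneousSubmodule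
    (initialForm_mem_weightedHomogeneousSubmodule L _ hb)⟩

/-- The Euler operators are homogeneous as soon as all the products `x_j ∂_j` have the same
degree. -/
lemma eulerXD_mem_weightedHomogeneousSubmodule {ω : Fin n ⊕ Fin n → ℕ} {N : ℕ}
    (hω : ∀ j, ω (Sum.inl j) + ω (Sum.inr j) = N) (i : Fin d) :
    eulerXD A i ∈ weightedHomogeneousSubmodule ℂ ω N := by
  refine Submodule.sum_mem _ fun j _ ↦ ?_
  have h1 := (isWeightedHomogeneous_X ℂ ω (Sum.inl j)).mul
    (isWeightedHomogeneous_X ℂ ω (Sum.inr j))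
  have h2 := (isWeightedHomogeneous_C ω (A i j : ℂ)).mul h1
  rw [zero_add, hω] at h2
  rw [mul_assoc]
  simpa using h2

end InitialGraded

/-! ### The dimension of the zero locus of the Euler operators -/

section UpperBound

lemma exists_common_denominator {ι : Type} [Finite ι] (c : ι → ℚ) :
    ∃ m : ℕ, 0 < m ∧ ∃ c' : ι → ℤ, ∀ i, (c' i : ℚ) = m * c i := by
  obtain ⟨⟨b, hb⟩, h⟩ := IsLocalization.exist_integer_multiples_of_finite (nonZeroDivisors ℤ) c
  have hb0 : b ≠ 0 := nonZeroDivisors.ne_zero hb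
  choose c' hc' using h
  refine ⟨b.natAbs, Int.natAbs_pos.2 hb0, fun i ↦ b.sign * c' i, fun i ↦ ?_⟩
  have h1 : ((c' i : ℤ) : ℚ) = b * c i := by simpa using hc' i
  push_cast
  rw [h1, ← mul_assoc, ← Int.cast_mul, Int.sign_mul_self_eq_abs]
  simp

/-- The Krull dimension of an affine domain is bounded by its transcendence degree. -/
lemma ringKrullDim_le_of_isAlgebraic_adjoin {D : Type} [CommRing D] [IsDomain D] [Algebra ℂ D]
    [Algebra.FiniteType ℂ D] {n : ℕ} (s : Fin n → D)
    (hs : Algebra.IsAlgebraic (Algebra.adjoin ℂ (Set.range s)) D) : ringKrullDim D ≤ n := by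
  obtain ⟨r, g, hginj, hgint⟩ := exists_integral_inj_algHom_of_fg ℂ D
  have hr : r ≤ n := by
    have h1 : AlgebraicIndependent ℂ (fun i ↦ g (X i)) := by
      rw [AlgebraicIndependent]
      convert hginj using 1
      have : aeval (fun i ↦ g (X i)) = g := by ext; simp
      rw [this]
    have h2 := h1.cardinalMk_le_trdeg.trans
      ((Algebra.IsAlgebraic.trdeg_le_cardinalMk ℂ (Set.range s)).trans Cardinal.mk_range_le)
    simpa using h2
  have h3 : ringKrullDim D ≤ ringKrullDim (MvPolynomial (Fin r) ℂ) := by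
    let _ : Algebra (MvPolynomial (Fin r) ℂ) D := g.toRingHom.toAlgebra
    have : Algebra.IsIntegral (MvPolynomial (Fin r) ℂ) D := ⟨hgint⟩
    refine Order.krullDim_le_of_strictMono
      (PrimeSpectrum.comap (algebraMap (MvPolynomial (Fin r) ℂ) D)) fun p q hpq ↦ ?_
    exact Ideal.IsIntegral.comap_lt_comap (I := p.asIdeal) (J := q.asIdeal) hpq
  rw [MvPolynomial.ringKrullDim_of_isNoetherianRing] at h3
  simp at h3
  exact h3.trans (by exact_mod_cast hr)

variable {d n : ℕ} (A : Matrix (Fin d) (Fin n) ℤ) (L : Fin n → ℚ)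

lemma initialForm_binomial {u v : Fin n →₀ ℕ} (huv : u ≠ v) :
    initialForm L (monomial u 1 - monomial v 1) =
      (if wt L v ≤ wt L u then monomial u 1 else 0) -
        (if wt L u ≤ wt L v then monomial v 1 else 0) := by
  classical
  ext w
  have hsupp (z : Fin n →₀ ℕ) : z ∈ (monomial u (1 : ℂ) - monomial v 1).support ↔
      z = u ∨ z = v := by
    rw [mem_support_iff, coeff_sub, coeff_monomial, coeff_monomial]
    by_cases h1 : u = z
    · have : v ≠ z := fun h ↦ huv (h1.trans h.symm)
      simp [h1, this]
    · by_cases h2 : v = z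
      · simp [h1, h2]
      · simp [h1, h2, Ne.symm h1, Ne.symm h2]
  rw [coeff_initialForm]
  simp only [hsupp, forall_eq_or_imp, forall_eq, coeff_sub, coeff_monomial]
  by_cases h1 : u = w
  · subst h1
    have : v ≠ u := Ne.symm huv
    by_cases h3 : wt L v ≤ wt L u <;> by_cases h4 : wt L u ≤ wt L v <;>
      simp [this, h3, h4, coeff_monomial]
  · by_cases h2 : v = w
    · subst h2
      by_cases h3 : wt L v ≤ wt L u <;> by_cases h4 : wt L u ≤ wt L v <;>
        simp [h1, h3, h4, coeff_monomial]
    · by_cases h3 : wt L v ≤ wt L u <;> by_cases h4 : wt L u ≤ wt L v <;>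
        simp [h1, h2, h3, h4, coeff_monomial]

/-- If the initial ideal vanishes under `φ` but two monomials of the same `A`-degree do not, then
these have the same image: the initial form of their difference cannot be a monomial. -/
lemma map_monomial_eq_of_mulVec_eq {D : Type} [CommRing D] [Algebra ℂ D]
    (φ : MvPolynomial (Fin n) ℂ →ₐ[ℂ] D)
    (hφ : ∀ f ∈ initialIdeal L (toricIdeal A), φ f = 0) {u v : Fin n →₀ ℕ}
    (huv : A.mulVec (fun j => (u j : ℤ)) = A.mulVec (fun j => (v j : ℤ)))
    (hu : φ (monomial u 1) ≠ 0) (hv : φ (monomial v 1) ≠ 0) :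
    φ (monomial u 1) = φ (monomial v 1) := by
  by_cases h : u = v
  · rw [h]
  have h1 := hφ _ (Ideal.subset_span ⟨monomial u 1 - monomial v 1,
    Ideal.subset_span ⟨u, v, huv, rfl⟩, fun h0 ↦ h ?_, rfl⟩)
  · rw [initialForm_binomial L h] at h1
    by_cases h3 : wt L v ≤ wt L u <;> by_cases h4 : wt L u ≤ wt L v
    · rw [if_pos h3, if_pos h4, map_sub] at h1
      exact sub_eq_zero.1 h1
    · rw [if_pos h3, if_neg h4, sub_zero] at h1
      exact absurd h1 hu
    · rw [if_neg h3, if_pos h4, zero_sub, map_neg, neg_eq_zero] at h1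
      exact absurd h1 hv
    · exact absurd (le_of_not_ge h3) h4
  · exact monomial_left_injective one_ne_zero (sub_eq_zero.1 h0)

/-- A rational dependency between integer columns yields an equality of `A`-degrees. -/
lemma exists_int_relation {B : Set (Fin n)} {j : Fin n}
    (hj : (fun i ↦ (A i j : ℚ)) ∈ Submodule.span ℚ ((fun b i ↦ (A i b : ℚ)) '' B)) :
    ∃ m : ℕ, 0 < m ∧ ∃ c : Fin n → ℤ, (∀ b, b ∉ B → c b = 0) ∧
      ∀ i, (m : ℤ) * A i j = ∑ b, A i b * c b := by
  obtain ⟨l, hlB, hl⟩ := (Finsupp.mem_span_image_iff_linearCombination ℚ).1 hj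
  obtain ⟨m, hm, c, hc⟩ := exists_common_denominator l
  refine ⟨m, hm, c, fun b hb ↦ ?_, fun i ↦ ?_⟩
  · have : l b = 0 := by
      by_contra h0
      exact hb (hlB (Finsupp.mem_support_iff.2 h0))
    have h2 := hc b
    rw [this, mul_zero] at h2
    exact_mod_cast h2
  · have h1 := congrFun hl i
    rw [Finsupp.linearCombination_apply, Finsupp.sum_fintype _ _ (by simp)] at h1
    simp only [Finset.sum_apply, Pi.smul_apply, smul_eq_mul] at h1
    have : ((m : ℤ) * A i j : ℚ) = ∑ b, (A i b : ℚ) * (c b : ℚ) := by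
      rw [← h1, Finset.mul_sum]
      refine Finset.sum_congr rfl fun b _ ↦ ?_
      rw [hc]
      push_cast
      ring
    exact_mod_cast this

section Fibre

variable {D : Type} [CommRing D] [IsDomain D] [Algebra ℂ D]
  (φ : MvPolynomial (Fin n ⊕ Fin n) ℂ →ₐ[ℂ] D)

omit [IsDomain D] in
lemma map_rename_monomial (u : Fin n →₀ ℕ) :
    (φ.comp (rename Sum.inr)) (monomial u (1 : ℂ)) = ∏ j, φ (X (Sum.inr j)) ^ u j := by
  rw [monomial_eq, Finsupp.prod_fintype _ _ (by simp)]
  simp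

/-- A relation between columns gives a relation between monomials, which makes the value of `∂_j`
algebraic over the values of the `∂_b` whose columns span `a_j`. -/
lemma isAlgebraic_inr_of_mem_span (hφ : ∀ f ∈ grIdealXD A L, φ f = 0) (P : Subalgebra ℂ D)
    {B : Set (Fin n)} (hB0 : ∀ b ∈ B, φ (X (Sum.inr b)) ≠ 0)
    (hB : ∀ b ∈ B, φ (X (Sum.inr b)) ∈ P) {j : Fin n} (hj0 : φ (X (Sum.inr j)) ≠ 0)
    (hj : (fun i ↦ (A i j : ℚ)) ∈ Submodule.span ℚ ((fun b i ↦ (A i b : ℚ)) '' B)) :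
    IsAlgebraic P (φ (X (Sum.inr j))) := by
  classical
  obtain ⟨m, hm, c, hcB, hc⟩ := exists_int_relation A hj
  let u₀ : Fin n →₀ ℕ := Finsupp.equivFunOnFinite.symm fun b ↦ (-c b).toNat
  let v : Fin n →₀ ℕ := Finsupp.equivFunOnFinite.symm fun b ↦ (c b).toNat
  have hnz (w : Fin n → ℕ) (hw : ∀ b, b ∉ B → w b = 0) :
      ∏ b, φ (X (Sum.inr b)) ^ w b ≠ 0 := by
    refine Finset.prod_ne_zero_iff.2 fun b _ ↦ ?_
    by_cases hb : b ∈ B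
    · exact pow_ne_zero _ (hB0 b hb)
    · simp [hw b hb]
  have hP (w : Fin n → ℕ) (hw : ∀ b, b ∉ B → w b = 0) :
      IsAlgebraic P (∏ b, φ (X (Sum.inr b)) ^ w b) := by
    have : ∏ b, φ (X (Sum.inr b)) ^ w b ∈ P := by
      refine Subalgebra.prod_mem _ fun b _ ↦ ?_
      by_cases hb : b ∈ B
      · exact Subalgebra.pow_mem _ (hB b hb) _
      · simp [hw b hb]
    exact isAlgebraic_algebraMap (⟨_, this⟩ : P)
  have hu0 (b : Fin n) (hb : b ∉ B) : u₀ b = 0 := by simp [u₀, hcB b hb]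
  have hv0 (b : Fin n) (hb : b ∉ B) : v b = 0 := by simp [v, hcB b hb]
  have hmono : (φ.comp (rename Sum.inr)) (monomial (u₀ + Finsupp.single j m) (1 : ℂ)) =
      (∏ b, φ (X (Sum.inr b)) ^ u₀ b) * φ (X (Sum.inr j)) ^ m := by
    have : monomial (u₀ + Finsupp.single j m) (1 : ℂ) = monomial u₀ 1 * X j ^ m := by
      rw [X_pow_eq_monomial, monomial_mul, one_mul]
    rw [this, map_mul, map_rename_monomial]
    simp
  have key := map_monomial_eq_of_mulVec_eq A L (φ.comp (rename Sum.inr))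
    (fun f hf ↦ hφ _ (Ideal.mem_map_of_mem _ hf)) (u := u₀ + Finsupp.single j m) (v := v) (by
      ext i
      have h1 (b : Fin n) : A i b * ((u₀ + Finsupp.single j m) b : ℤ) =
          A i b * (v b : ℤ) + ((if j = b then (m : ℤ) * A i b else 0) - A i b * c b) := by
        have h2 : ((u₀ b : ℕ) : ℤ) = (v b : ℤ) - c b := by
          change (((-c b).toNat : ℕ) : ℤ) = ((c b).toNat : ℤ) - c b
          omega
        rw [Finsupp.add_apply, Finsupp.single_apply]
        push_cast
        rw [h2]
        split_ifs <;> ring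
      simp only [Matrix.mulVec, dotProduct, h1]
      rw [Finset.sum_add_distrib, Finset.sum_sub_distrib, ← hc]
      simp)
    (by rw [hmono]; exact mul_ne_zero (hnz _ hu0) (pow_ne_zero _ hj0))
    (by rw [map_rename_monomial]; exact hnz _ hv0)
  rw [hmono, map_rename_monomial] at key
  refine IsAlgebraic.of_pow hm (IsAlgebraic.of_mul (mem_nonZeroDivisors_of_ne_zero (hnz _ hu0))
    (hP _ hu0) ?_)
  rw [key]
  exact hP _ hv0

omit [IsDomain D] in
/-- A point killed by the Euler operators satisfies every rational combination of them. -/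
lemma sum_functional_eq_zero (hE : ∀ i, φ (eulerXD A i) = 0) (l : (Fin d → ℚ) →ₗ[ℚ] ℚ) :
    ∑ j, algebraMap ℂ D ((l fun i ↦ (A i j : ℚ) : ℚ) : ℂ) *
      (φ (X (Sum.inl j)) * φ (X (Sum.inr j))) = 0 := by
  have h1 : ∑ i, algebraMap ℂ D ((l (Pi.single i 1) : ℚ) : ℂ) * φ (eulerXD A i) = 0 := by simp [hE]
  rw [← h1]
  simp only [eulerXD, map_sum, Finset.mul_sum]
  rw [Finset.sum_comm]
  refine Finset.sum_congr rfl fun j _ ↦ ?_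
  have h2 : l (fun i ↦ (A i j : ℚ)) = ∑ i, (A i j : ℚ) * l (Pi.single i 1) := by
    rw [l.pi_apply_eq_sum_univ]
    refine Finset.sum_congr rfl fun i _ ↦ ?_
    rw [smul_eq_mul]
    congr 2
    ext k
    simp [Pi.single_apply, eq_comm]
  rw [h2, Rat.cast_sum, map_sum, Finset.sum_mul]
  refine Finset.sum_congr rfl fun i _ ↦ ?_
  simp
  ring

/-- The coordinate ring of an integral scheme contained in the common zero locus of the initial
ideal and the Euler operators is algebraic over `n` elements: with `B` indexing a basis among the
columns `a_j` for which `∂_j` does not vanish, these are `∂_b` for `b ∈ B` and `x_j` for `j ∉ B`.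
The Euler operators express each remaining `x_b` through the other coordinates. -/
lemma exists_isAlgebraic_adjoin (hφ : ∀ f ∈ grIdealXD A L, φ f = 0)
    (hE : ∀ i, φ (eulerXD A i) = 0) (hsurj : Function.Surjective φ) :
    ∃ s : Fin n → D, Algebra.IsAlgebraic (Algebra.adjoin ℂ (Set.range s)) D := by
  classical
  obtain ⟨B, hBσ, -, hspan, hli⟩ := exists_linearIndepOn_extension
    (K := ℚ) (v := fun j i ↦ (A i j : ℚ)) (s := ∅) (t := {j | φ (X (Sum.inr j)) ≠ 0})
    (linearIndepOn_empty _ _) (Set.empty_subset _)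
  let s : Fin n → D := fun j ↦ if j ∈ B then φ (X (Sum.inr j)) else φ (X (Sum.inl j))
  set P := Algebra.adjoin ℂ (Set.range s) with hPdef
  have hsP (j : Fin n) : s j ∈ P := Algebra.subset_adjoin ⟨j, rfl⟩
  have hinr (j : Fin n) : IsAlgebraic P (φ (X (Sum.inr j))) := by
    by_cases hj : φ (X (Sum.inr j)) = 0
    · rw [hj]; exact isAlgebraic_zero
    · refine isAlgebraic_inr_of_mem_span A L φ hφ P (B := B) (fun b hb ↦ hBσ hb)
        (fun b hb ↦ ?_) hj (hspan ⟨j, hj, rfl⟩)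
      have := hsP b
      rwa [show s b = _ from if_pos hb] at this
  have hinl' (j : Fin n) (hj : j ∉ B) : IsAlgebraic P (φ (X (Sum.inl j))) := by
    have := hsP j
    rw [show s j = _ from if_neg hj] at this
    exact isAlgebraic_algebraMap (⟨_, this⟩ : P)
  have hinl (b : Fin n) : IsAlgebraic P (φ (X (Sum.inl b))) := by
    by_cases hb : b ∉ B
    · exact hinl' b hb
    rw [not_not] at hb
    -- a functional that is `1` on the column `b` and `0` on the other columns in `B`
    obtain ⟨l, hl⟩ : ∃ l : (Fin d → ℚ) →ₗ[ℚ] ℚ,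
        ∀ b' ∈ B, l (fun i ↦ (A i b' : ℚ)) = if b' = b then 1 else 0 := by
      have hli' : LinearIndependent ℚ fun (x : B) i ↦ (A i x : ℚ) := hli
      obtain ⟨l, hl⟩ := LinearMap.exists_extend
        ((Finsupp.lapply (⟨b, hb⟩ : B) : (B →₀ ℚ) →ₗ[ℚ] ℚ).comp hli'.repr)
      refine ⟨l, fun b' hb' ↦ ?_⟩
      let z : Submodule.span ℚ (Set.range fun (x : B) i ↦ (A i x : ℚ)) :=
        ⟨fun i ↦ (A i b' : ℚ), Submodule.subset_span ⟨⟨b', hb'⟩, rfl⟩⟩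
      have h2 := LinearMap.congr_fun hl z
      have h3 := hli'.repr_eq_single ⟨b', hb'⟩ z rfl
      simp only [LinearMap.comp_apply, Submodule.subtype_apply, h3] at h2
      refine h2.trans ?_
      simp [Finsupp.single_apply]
    have h1 := sum_functional_eq_zero A φ hE l
    rw [← Finset.add_sum_erase _ _ (Finset.mem_univ b), hl b hb, if_pos rfl, Rat.cast_one,
      map_one, one_mul, add_eq_zero_iff_eq_neg] at h1
    refine IsAlgebraic.of_mul (y := φ (X (Sum.inr b)))
      (mem_nonZeroDivisors_of_ne_zero (hBσ hb)) (hinr b) ?_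
    rw [mul_comm, h1]
    refine IsAlgebraic.neg (Subalgebra.sum_mem (Subalgebra.algebraicClosure P D) fun j hj ↦ ?_)
    by_cases hjB : j ∈ B
    · rw [hl j hjB, if_neg (Finset.ne_of_mem_erase hj), Rat.cast_zero, map_zero,
        zero_mul]
      exact Subalgebra.zero_mem _
    · refine Subalgebra.mul_mem _ ?_ (Subalgebra.mul_mem _ (hinl' j hjB) (hinr j))
      exact isAlgebraic_algebraMap (algebraMap ℂ P ((l fun i ↦ (A i j : ℚ) : ℚ) : ℂ))
  refine ⟨s, ⟨fun x ↦ ?_⟩⟩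
  obtain ⟨p, rfl⟩ := hsurj x
  change φ p ∈ Subalgebra.algebraicClosure P D
  induction p using MvPolynomial.induction_on with
  | C a =>
    have : φ (C a) = algebraMap ℂ D a := φ.commutes a
    rw [this]
    exact isAlgebraic_algebraMap (algebraMap ℂ P a)
  | add p q hp hq => rw [map_add]; exact Subalgebra.add_mem _ hp hq
  | mul_X p v hp =>
    rw [map_mul]
    refine Subalgebra.mul_mem _ hp ?_
    rcases v with j | j
    exacts [hinl j, hinr j]

end Fibre

/-- The common zero locus of the initial ideal and the Euler operators has dimension at most
`n`. -/
lemma ringKrullDim_quotient_le_of_euler (Q : Ideal (MvPolynomial (Fin n ⊕ Fin n) ℂ)) [Q.IsPrime]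
    (hJ : grIdealXD A L ≤ Q) (hE : ∀ i, eulerXD A i ∈ Q) :
    ringKrullDim (MvPolynomial (Fin n ⊕ Fin n) ℂ ⧸ Q) ≤ n := by
  obtain ⟨s, hs⟩ := exists_isAlgebraic_adjoin A L (Ideal.Quotient.mkₐ ℂ Q)
    (fun f hf ↦ Ideal.Quotient.eq_zero_iff_mem.2 (hJ hf))
    (fun i ↦ Ideal.Quotient.eq_zero_iff_mem.2 (hE i)) (Ideal.Quotient.mkₐ_surjective ℂ Q)
  exact ringKrullDim_le_of_isAlgebraic_adjoin s hs

end UpperBound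

/-! ### Positive gradings and vertices -/

section Gordan

/-- Gordan's alternative over `ℚ`: finitely many vectors either lie in an open half-space, or
satisfy a nontrivial relation with nonnegative coefficients. -/
lemma exists_pos_functional_or_relation (n : ℕ) : ∀ {V : Type} [AddCommGroup V] [Module ℚ V]
    (a : Fin n → V), (∃ h : V →ₗ[ℚ] ℚ, ∀ j, 0 < h (a j)) ∨
      ∃ c : Fin n → ℚ, (∀ j, 0 ≤ c j) ∧ c ≠ 0 ∧ ∑ j, c j • a j = 0 := by
  induction n with
  | zero => exact fun {V} _ _ a ↦ Or.inl ⟨0, fun j ↦ j.elim0⟩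
  | succ n ih =>
    intro V _ _ a
    -- a relation among all vectors but the first extends to a relation among all of them
    have hext (t : ℚ) (ht : 0 ≤ t) (c : Fin n → ℚ) (hc : ∀ j, 0 ≤ c j) (hne : t ≠ 0 ∨ c ≠ 0)
        (hs : t • a 0 + ∑ j, c j • a j.succ = 0) :
        ∃ c : Fin (n + 1) → ℚ, (∀ j, 0 ≤ c j) ∧ c ≠ 0 ∧ ∑ j, c j • a j = 0 := by
      refine ⟨Fin.cons t c, fun j ↦ Fin.cases ht hc j, fun h0 ↦ ?_, ?_⟩
      · rcases hne with h | h
        · exact h (by simpa using congrFun h0 0)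
        · exact h (funext fun j ↦ by simpa using congrFun h0 j.succ)
      · rw [Fin.sum_univ_succ]
        simpa using hs
    by_cases ha0 : a 0 = 0
    · exact Or.inr (hext 1 zero_le_one 0 (fun _ ↦ le_rfl) (Or.inl one_ne_zero) (by simp [ha0]))
    rcases ih (fun j ↦ (Submodule.span ℚ {a 0}).mkQ (a j.succ)) with ⟨h, hh⟩ | ⟨c, hc, hc0, hs⟩
    · -- perturb a functional vanishing on the first vector
      left
      obtain ⟨g, hg⟩ := Module.Projective.exists_dual_eq_one ℚ ha0
      obtain ⟨N, hN⟩ := (Set.finite_range fun j ↦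
        -(g (a (Fin.succ j))) / h ((Submodule.span ℚ {a 0}).mkQ (a j.succ))).bddAbove
      refine ⟨(N + 1) • h.comp (Submodule.span ℚ {a 0}).mkQ + g, fun j ↦ Fin.cases ?_ ?_ j⟩
      · have h0 : (Submodule.span ℚ {a 0}).mkQ (a 0) = 0 :=
          (Submodule.Quotient.mk_eq_zero _).2 (Submodule.mem_span_singleton_self _)
        rw [LinearMap.add_apply, LinearMap.smul_apply, LinearMap.comp_apply, h0, hg]
        simp
      · intro j
        have h1 := (div_le_iff₀ (hh j)).1 (hN ⟨j, rfl⟩)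
        have h2 := hh j
        rw [LinearMap.add_apply, LinearMap.smul_apply, LinearMap.comp_apply, smul_eq_mul]
        linarith
    · have hmem : ∑ j, c j • a j.succ ∈ Submodule.span ℚ {a 0} := by
        rw [← Submodule.Quotient.mk_eq_zero, ← Submodule.mkQ_apply, map_sum]
        simpa using hs
      obtain ⟨t, ht⟩ := Submodule.mem_span_singleton.1 hmem
      rcases le_or_gt t 0 with ht0 | ht0
      · exact Or.inr (hext (-t) (by linarith) c hc (Or.inr hc0) (by rw [← ht]; simp))
      rcases ih (fun j ↦ a j.succ) with ⟨h, hh⟩ | ⟨c', hc', hc0', hs'⟩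
      · refine Or.inl ⟨h, fun j ↦ Fin.cases ?_ hh j⟩
        have h1 := congrArg h ht
        rw [map_smul, map_sum, smul_eq_mul] at h1
        obtain ⟨k, hk⟩ := Function.ne_iff.1 hc0
        have hk' : 0 < c k := lt_of_le_of_ne (hc k) (Ne.symm hk)
        have h2 : 0 < ∑ j, h (c j • a j.succ) := by
          refine Finset.sum_pos' (fun j _ ↦ ?_) ⟨k, Finset.mem_univ _, ?_⟩
          · rw [map_smul, smul_eq_mul]; exact mul_nonneg (hc j) (hh j).le
          · rw [map_smul, smul_eq_mul]; exact mul_pos hk' (hh k)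
        rw [← h1] at h2
        exact pos_of_mul_pos_right h2 ht0.le
      · exact Or.inr (hext 0 le_rfl c' hc' (Or.inr hc0') (by simpa using hs'))

/-- The polyhedron of functionals `c` with `c (a j) ≤ L j` has a vertex: the inequalities tight at
it are tight on a spanning set of vectors. -/
lemma exists_vertex {n : ℕ} {V : Type} [AddCommGroup V] [Module ℚ V] (a : Fin n → V)
    (hspan : Submodule.span ℚ (Set.range a) = ⊤) (h : V →ₗ[ℚ] ℚ) (hpos : ∀ j, 0 < h (a j))
    (L : Fin n → ℚ) : ∃ c : V →ₗ[ℚ] ℚ, (∀ j, c (a j) ≤ L j) ∧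
      Submodule.span ℚ (a '' {j | c (a j) = L j}) = ⊤ := by
  classical
  -- a feasible functional
  obtain ⟨N, hN⟩ : ∃ N : ℚ, ∀ j, -(L j) / h (a j) ≤ N := by
    obtain ⟨N, hN⟩ := (Set.finite_range fun j ↦ -(L j) / h (a j)).bddAbove
    exact ⟨N, fun j ↦ hN ⟨j, rfl⟩⟩
  have hfeas : ∃ c : V →ₗ[ℚ] ℚ, ∀ j, c (a j) ≤ L j := by
    refine ⟨-N • h, fun j ↦ ?_⟩
    have := (div_le_iff₀ (hpos j)).1 (hN j)
    simp only [LinearMap.smul_apply, smul_eq_mul]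
    linarith
  -- the number of tight inequalities is bounded, so one may maximise it
  obtain ⟨k, ⟨c, hc, hck⟩, hmax⟩ : ∃ k : ℕ, (∃ c : V →ₗ[ℚ] ℚ, (∀ j, c (a j) ≤ L j) ∧
      ({j | c (a j) = L j} : Finset (Fin n)).card = k) ∧
      ∀ c : V →ₗ[ℚ] ℚ, (∀ j, c (a j) ≤ L j) →
        ({j | c (a j) = L j} : Finset (Fin n)).card ≤ k := by
    let P : ℕ → Prop := fun k ↦ ∃ c : V →ₗ[ℚ] ℚ, (∀ j, c (a j) ≤ L j) ∧
      ({j | c (a j) = L j} : Finset (Fin n)).card = k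
    have hb (c : V →ₗ[ℚ] ℚ) : ({j | c (a j) = L j} : Finset (Fin n)).card ≤ n :=
      (Finset.card_le_univ _).trans (by simp)
    obtain ⟨c₀, hc₀⟩ := hfeas
    refine ⟨Nat.findGreatest P n, Nat.findGreatest_spec (P := P) (hb c₀) ⟨c₀, hc₀, rfl⟩,
      fun c hc ↦ Nat.le_findGreatest (hb c) ⟨c, hc, rfl⟩⟩
  refine ⟨c, hc, ?_⟩
  by_contra hne
  obtain ⟨g₀, hg₀, hg₀k⟩ := Submodule.exists_le_ker_of_lt_top _ (lt_top_iff_ne_top.2 hne)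
  -- a direction that keeps the tight inequalities tight and increases some other one
  obtain ⟨g, hgk, i, hgi⟩ : ∃ g : V →ₗ[ℚ] ℚ, (∀ j, c (a j) = L j → g (a j) = 0) ∧
      ∃ i, 0 < g (a i) := by
    have hk (j) (hj : c (a j) = L j) : g₀ (a j) = 0 :=
      LinearMap.mem_ker.1 (hg₀k (Submodule.subset_span ⟨j, hj, rfl⟩))
    obtain ⟨i, hi⟩ : ∃ i, g₀ (a i) ≠ 0 := by
      by_contra! hall
      refine hg₀ (LinearMap.ext_on_range hspan fun j ↦ ?_)
      simpa using hall j
    rcases lt_or_gt_of_ne hi with h1 | h1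
    · exact ⟨-g₀, fun j hj ↦ by simp [hk j hj], i, by simpa using h1⟩
    · exact ⟨g₀, hk, i, h1⟩
  obtain ⟨i₁, hi₁, hmin⟩ := Finset.exists_min_image ({j | 0 < g (a j)} : Finset (Fin n))
    (fun j ↦ (L j - c (a j)) / g (a j)) ⟨i, by simpa using hgi⟩
  have hi₁' : 0 < g (a i₁) := by simpa using hi₁
  set t := (L i₁ - c (a i₁)) / g (a i₁) with ht
  have ht0 : 0 ≤ t := div_nonneg (sub_nonneg.2 (hc i₁)) hi₁'.le
  have hfeas' (j) : (c + t • g) (a j) ≤ L j := by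
    simp only [LinearMap.add_apply, LinearMap.smul_apply, smul_eq_mul]
    rcases le_or_gt (g (a j)) 0 with h1 | h1
    · have := mul_nonneg ht0 (neg_nonneg.2 h1)
      have := hc j
      linarith
    · have := (le_div_iff₀ h1).1 (hmin j (by simpa using h1))
      linarith
  have hlt : ({j | c (a j) = L j} : Finset (Fin n)) ⊂
      ({j | (c + t • g) (a j) = L j} : Finset (Fin n)) := by
    refine Finset.ssubset_iff_of_subset (fun j hj ↦ ?_) |>.2 ⟨i₁, ?_, ?_⟩
    · have hj' : c (a j) = L j := by simpa using hj
      simp [hj', hgk j hj']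
    · have : t * g (a i₁) = L i₁ - c (a i₁) := div_mul_cancel₀ _ hi₁'.ne'
      simp [this]
    · intro hj
      exact hi₁'.ne' (hgk i₁ (by simpa using hj))
  have := Finset.card_lt_card hlt
  have := hmax _ hfeas'
  omega

variable {d n : ℕ} (A : Matrix (Fin d) (Fin n) ℤ)

/-- If `ℕA` is pointed and the columns of `A` are nonzero, then some integral functional is
positive on all the columns. -/
lemma exists_pos_grading (hcols : ∀ j, (fun i => A i j) ≠ 0) (hpointed : IsPointed A) :
    ∃ h : Fin d → ℤ, ∀ j, 0 < ∑ i, h i * A i j := by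
  rcases exists_pos_functional_or_relation n (fun j i ↦ (A i j : ℚ)) with
    ⟨h, hh⟩ | ⟨c, hc, hc0, hs⟩
  · obtain ⟨m, hm, h', hh'⟩ := exists_common_denominator fun i ↦ h (Pi.single i 1)
    refine ⟨h', fun j ↦ ?_⟩
    have h2 : h (fun i ↦ (A i j : ℚ)) = ∑ i, (A i j : ℚ) * h (Pi.single i 1) := by
      rw [h.pi_apply_eq_sum_univ]
      refine Finset.sum_congr rfl fun i _ ↦ ?_
      rw [smul_eq_mul]
      congr 2
      ext k
      simp [Pi.single_apply, eq_comm]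
    have h3 : ((∑ i, h' i * A i j : ℤ) : ℚ) = m * h (fun i ↦ (A i j : ℚ)) := by
      rw [h2, Finset.mul_sum]
      push_cast
      refine Finset.sum_congr rfl fun i _ ↦ ?_
      rw [hh']
      ring
    have h4 : (0 : ℚ) < ((∑ i, h' i * A i j : ℤ) : ℚ) := by
      rw [h3]
      exact mul_pos (by exact_mod_cast hm) (hh j)
    exact_mod_cast h4
  · exfalso
    obtain ⟨m, hm, c', hc'⟩ := exists_common_denominator c
    obtain ⟨k, hk⟩ := Function.ne_iff.1 hc0
    have hk' : 0 < c k := lt_of_le_of_ne (hc k) (Ne.symm hk)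
    have hm' : (0 : ℚ) < m := by exact_mod_cast hm
    have hc'0 (j) : 0 ≤ c' j := by
      have : (0 : ℚ) ≤ c' j := by rw [hc']; exact mul_nonneg hm'.le (hc j)
      exact_mod_cast this
    have hc'k : 0 < c' k := by
      have : (0 : ℚ) < c' k := by rw [hc']; exact mul_pos hm' hk'
      exact_mod_cast this
    have hrel : ∑ j, (c' j).toNat • (fun i ↦ A i j) = 0 := by
      ext i
      have h1 := congrFun hs i
      simp only [Finset.sum_apply, Pi.smul_apply, smul_eq_mul, Pi.zero_apply] at h1 ⊢
      have h2 : ((∑ j, c' j * A i j : ℤ) : ℚ) = m * ∑ j, c j * (A i j : ℚ) := by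
        rw [Finset.mul_sum]
        push_cast
        refine Finset.sum_congr rfl fun j _ ↦ ?_
        rw [hc']
        ring
      rw [h1, mul_zero] at h2
      have h3 : ∑ j, c' j * A i j = 0 := by exact_mod_cast h2
      rw [← h3]
      refine Finset.sum_congr rfl fun j _ ↦ ?_
      rw [nsmul_eq_mul, Int.toNat_of_nonneg (hc'0 j)]
    have hcol (j) : (fun i ↦ A i j) ∈ AddSubmonoid.closure (cols A) :=
      AddSubmonoid.subset_closure ⟨j, rfl⟩
    refine hcols k (hpointed _ (hcol k) ?_)
    rw [← Finset.add_sum_erase _ _ (Finset.mem_univ k)] at hrel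
    obtain ⟨p, hp⟩ : ∃ p, (c' k).toNat = p + 1 := ⟨(c' k).toNat - 1, by omega⟩
    rw [hp, add_smul, one_smul, add_right_comm, add_eq_zero_iff_eq_neg] at hrel
    rw [← hrel]
    exact add_mem (nsmul_mem (hcol k) _) (sum_mem fun j _ ↦ nsmul_mem (hcol j) _)

/-- Columns generating `ℤ^d` as a group span `ℚ^d`. -/
lemma span_cols_eq_top (hZA : AddSubgroup.closure (cols A) = ⊤) :
    Submodule.span ℚ (Set.range fun j i ↦ (A i j : ℚ)) = ⊤ := by
  have key (z : Fin d → ℤ) (hz : z ∈ AddSubgroup.closure (cols A)) :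
      (fun i ↦ (z i : ℚ)) ∈ Submodule.span ℚ (Set.range fun j i ↦ (A i j : ℚ)) := by
    induction hz using AddSubgroup.closure_induction with
    | mem x hx =>
      obtain ⟨j, rfl⟩ := hx
      exact Submodule.subset_span ⟨j, rfl⟩
    | zero => simp [← Pi.zero_def]
    | add x y _ _ hx hy => simpa [Pi.add_def] using Submodule.add_mem _ hx hy
    | neg x _ hx => simpa [Pi.neg_def] using Submodule.neg_mem _ hx
  rw [eq_top_iff, ← (Pi.basisFun ℚ (Fin d)).span_eq, Submodule.span_le]
  rintro _ ⟨i, rfl⟩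
  have := key (Pi.single i 1) (by rw [hZA]; trivial)
  have h2 : Pi.basisFun ℚ (Fin d) i = fun k ↦ ((Pi.single i 1 : Fin d → ℤ) k : ℚ) := by
    ext k
    simp [Pi.single_apply]
  rw [h2]
  exact this

end Gordan

/-! ### Torus-invariant primes -/

section Torus

variable {τ : Type} [Fintype τ]

/-- The degree of an exponent vector for the grading given by `deg (X j) = g j`. -/
def expDeg {H : Type} [AddCommMonoid H] (g : τ → H) (u : τ →₀ ℕ) : H := ∑ j, u j • g j

/-- The map to the group algebra of `H` sending each variable `X j` with `j ∈ σ` to the group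
element `g j`, and all the other variables to `0`. -/
def faceMap {H : Type} [AddCommMonoid H] (g : τ → H) (σ : Set τ) :
    MvPolynomial τ ℂ →ₐ[ℂ] AddMonoidAlgebra ℂ H :=
  open Classical in aeval fun j ↦ if j ∈ σ then AddMonoidAlgebra.single (g j) 1 else 0

open Classical in
lemma faceMap_monomial {H : Type} [AddCommMonoid H] (g : τ → H) (σ : Set τ) (u : τ →₀ ℕ)
    (c : ℂ) : faceMap g σ (monomial u c) =
      if ∀ j, j ∉ σ → u j = 0 then AddMonoidAlgebra.single (expDeg g u) c else 0 := by
  have hprod : faceMap g σ (monomial u c) = algebraMap ℂ _ c * ∏ j,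
      (if j ∈ σ then AddMonoidAlgebra.single (g j) (1 : ℂ) else 0) ^ u j := by
    rw [faceMap, aeval_monomial, Finsupp.prod_fintype _ _ (by simp)]
  rw [hprod]
  split_ifs with h
  · have h1 : ∀ s : Finset τ, ∏ j ∈ s, (if j ∈ σ then AddMonoidAlgebra.single (g j) (1 : ℂ)
        else 0) ^ u j = AddMonoidAlgebra.single (∑ j ∈ s, u j • g j) 1 := by
      intro s
      induction s using Finset.induction_on with
      | empty => simp [AddMonoidAlgebra.one_def]
      | insert j s hj ih =>
        rw [Finset.prod_insert hj, Finset.sum_insert hj, ih]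
        by_cases hjσ : j ∈ σ
        · rw [if_pos hjσ, AddMonoidAlgebra.single_pow, AddMonoidAlgebra.single_mul_single]
          simp
        · simp [h j hjσ]
    rw [h1, expDeg]
    simp
  · push Not at h
    obtain ⟨j, hj, hu⟩ := h
    rw [Finset.prod_eq_zero (Finset.mem_univ j), mul_zero]
    rw [if_neg hj, zero_pow hu]

lemma coeff_faceMap {H : Type} [AddCommMonoid H] (g : τ → H) (σ : Set τ) (s : Finset (τ →₀ ℕ))
    (c : (τ →₀ ℕ) → ℂ) (b : H)
    [DecidablePred fun u : τ →₀ ℕ ↦ (∀ j, j ∉ σ → u j = 0) ∧ expDeg g u = b] :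
    (faceMap g σ (∑ u ∈ s, monomial u (c u))).coeff b =
      ∑ u ∈ s with (∀ j, j ∉ σ → u j = 0) ∧ expDeg g u = b, c u := by
  classical
  rw [map_sum, AddMonoidAlgebra.coeff_sum, Finsupp.finsetSum_apply, Finset.sum_filter]
  refine Finset.sum_congr rfl fun u _ ↦ ?_
  rw [faceMap_monomial]
  by_cases h : ∀ j, j ∉ σ → u j = 0
  · rw [if_pos h, AddMonoidAlgebra.coeff_single, Finsupp.single_apply]
    exact if_congr (and_iff_right h).symm rfl rfl
  · rw [if_neg h, if_neg fun h' ↦ h h'.1]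
    rfl

omit [Fintype τ] in
lemma faceMap_comp {H H' : Type} [AddCommMonoid H] [AddCommMonoid H'] (g : τ → H) (σ : Set τ)
    (π : H →+ H') : (AddMonoidAlgebra.mapDomainAlgHom ℂ ℂ π).comp (faceMap g σ) =
      faceMap (π ∘ g) σ := by
  classical
  refine MvPolynomial.algHom_ext fun j ↦ ?_
  by_cases h : j ∈ σ <;> simp [faceMap, h]

/-- The initial form of an `A`-homogeneous relation vanishes on the torus of a face of the regular
subdivision induced by `L`: within each degree, the monomials supported on `σ` are precisely those
of least `L`-weight, so if such a monomial occurs in the initial form of `f` (which keeps the terms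
of greatest weight), then on `σ` the initial form and `f` have the same terms of that degree. -/
lemma faceMap_initialForm {n : ℕ} {H : Type} [AddCommGroup H] [Module ℚ H] (g : Fin n → H)
    (L : Fin n → ℚ) (c : H →ₗ[ℚ] ℚ) (hc : ∀ j, c (g j) ≤ L j) {f : MvPolynomial (Fin n) ℂ}
    (hf : faceMap g Set.univ f = 0) : faceMap g {j | c (g j) = L j} (initialForm L f) = 0 := by
  classical
  have hdeg (u : Fin n →₀ ℕ) : c (expDeg g u) = ∑ j, c (g j) * u j := by
    simp [expDeg, mul_comm]
  have hle (u : Fin n →₀ ℕ) : c (expDeg g u) ≤ wt L u := by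
    rw [hdeg, wt]
    exact Finset.sum_le_sum fun j _ ↦ mul_le_mul_of_nonneg_right (hc j) (Nat.cast_nonneg _)
  have heq (u : Fin n →₀ ℕ) :
      (∀ j, j ∉ {j | c (g j) = L j} → u j = 0) ↔ c (expDeg g u) = wt L u := by
    rw [hdeg, wt, Finset.sum_eq_sum_iff_of_le
      fun j _ ↦ mul_le_mul_of_nonneg_right (hc j) (Nat.cast_nonneg _)]
    refine forall_congr' fun j ↦ ?_
    by_cases h1 : c (g j) = L j
    · simp [h1]
    · simp [h1]
  refine AddMonoidAlgebra.ext (Finsupp.ext fun b ↦ ?_)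
  rw [initialForm, coeff_faceMap]
  by_cases hex : ∃ u ∈ f.support, (∀ v ∈ f.support, wt L v ≤ wt L u) ∧
    c (expDeg g u) = wt L u ∧ expDeg g u = b
  · obtain ⟨u₀, hu₀, hmax, hu₀c, rfl⟩ := hex
    have h2 := congrArg (fun z ↦ z.coeff (expDeg g u₀)) hf
    rw [f.as_sum] at h2
    simp only [coeff_faceMap] at h2
    refine Eq.trans (Finset.sum_congr ?_ fun _ _ ↦ rfl) h2
    ext u
    simp only [Finset.mem_filter, heq, Set.mem_univ, not_true, false_imp_iff, implies_true,
      true_and]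
    constructor
    · rintro ⟨⟨h1, -⟩, -, h3⟩
      exact ⟨h1, h3⟩
    · rintro ⟨h1, h3⟩
      have h4 : wt L u = wt L u₀ :=
        le_antisymm (hmax u h1) (by rw [← hu₀c, ← h3]; exact hle u)
      exact ⟨⟨h1, fun v hv ↦ h4 ▸ hmax v hv⟩, by rw [h3, hu₀c, h4], h3⟩
  · refine Finset.sum_eq_zero fun u hu ↦ ?_
    rw [Finset.mem_filter, Finset.mem_filter] at hu
    exact absurd ⟨u, hu.1.1, hu.1.2, (heq u).1 hu.2.1, hu.2.2⟩ hex

variable {V : Type} [AddCommGroup V] [Module ℚ V] (g : τ → V) (σ : Set τ)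

/-- The vanishing ideal of the closure, within a coordinate subspace, of the orbit of the torus
with character group the image of `g` in `V ⧸ W`. -/
def torusIdeal (W : Submodule ℚ V) : Ideal (MvPolynomial τ ℂ) :=
  RingHom.ker (faceMap (W.mkQ ∘ g) σ)

instance (W : Submodule ℚ V) : (torusIdeal g σ W).IsPrime := RingHom.ker_isPrime _

omit [Fintype τ] in
lemma mem_torusIdeal {W : Submodule ℚ V} {f : MvPolynomial τ ℂ} :
    f ∈ torusIdeal g σ W ↔ faceMap (W.mkQ ∘ g) σ f = 0 := RingHom.mem_ker

omit [Fintype τ] in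
lemma mem_torusIdeal_of_faceMap_eq_zero (W : Submodule ℚ V) {f : MvPolynomial τ ℂ}
    (hf : faceMap g σ f = 0) : f ∈ torusIdeal g σ W := by
  rw [mem_torusIdeal]
  have := faceMap_comp g σ W.mkQ.toAddMonoidHom
  change _ = faceMap (W.mkQ ∘ g) σ at this
  rw [← this, AlgHom.comp_apply, hf, map_zero]

omit [Fintype τ] in
lemma torusIdeal_mono {W W' : Submodule ℚ V} (h : W ≤ W') :
    torusIdeal g σ W ≤ torusIdeal g σ W' := by
  intro f hf
  rw [mem_torusIdeal] at hf ⊢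
  have := faceMap_comp (W.mkQ ∘ g) σ (Submodule.factor h).toAddMonoidHom
  have h2 : (Submodule.factor h).toAddMonoidHom ∘ W.mkQ ∘ g = W'.mkQ ∘ g := by
    ext j; simp
  rw [h2] at this
  rw [← this, AlgHom.comp_apply, hf, map_zero]

lemma expDeg_mkQ (W : Submodule ℚ V) (u : τ →₀ ℕ) :
    expDeg (W.mkQ ∘ g) u = W.mkQ (expDeg g u) := by
  simp [expDeg]

/-- Enlarging `W` enlarges the ideal: a multiple of a vector of `W' \ W` is the difference of the
degrees of two monomials. -/
lemma torusIdeal_strictMono (hspan : Submodule.span ℚ (g '' σ) = ⊤) :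
    StrictMono (torusIdeal g σ) := by
  classical
  intro W W' h
  refine lt_of_le_of_ne (torusIdeal_mono g σ h.le) fun heq ↦ ?_
  obtain ⟨v, hv', hv⟩ := SetLike.exists_of_lt h
  have hvtop : v ∈ Submodule.span ℚ (g '' σ) := by rw [hspan]; trivial
  obtain ⟨l, hlσ, hl⟩ := (Finsupp.mem_span_image_iff_linearCombination ℚ).1 hvtop
  obtain ⟨m, hm, c, hc⟩ := exists_common_denominator l
  have hm' : (m : ℚ) ≠ 0 := by exact_mod_cast hm.ne'
  have hcσ (j) (hj : j ∉ σ) : c j = 0 := by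
    have : l j = 0 := by
      by_contra h0
      exact hj (hlσ (Finsupp.mem_support_iff.2 h0))
    have h2 := hc j
    rw [this, mul_zero] at h2
    exact_mod_cast h2
  let p : τ →₀ ℕ := Finsupp.equivFunOnFinite.symm fun j ↦ (c j).toNat
  let q : τ →₀ ℕ := Finsupp.equivFunOnFinite.symm fun j ↦ (-c j).toNat
  have hp (j) (hj : j ∉ σ) : p j = 0 := by simp [p, hcσ j hj]
  have hq (j) (hj : j ∉ σ) : q j = 0 := by simp [q, hcσ j hj]
  have hdiff : expDeg g p - expDeg g q = (m : ℚ) • v := by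
    rw [← hl, Finsupp.linearCombination_apply, Finsupp.sum_fintype _ _ (by simp), expDeg, expDeg,
      ← Finset.sum_sub_distrib, Finset.smul_sum]
    refine Finset.sum_congr rfl fun j _ ↦ ?_
    rw [smul_smul, ← hc, ← Nat.cast_smul_eq_nsmul ℚ, ← Nat.cast_smul_eq_nsmul ℚ, ← sub_smul]
    congr 1
    have : (((c j).toNat : ℤ) - ((-c j).toNat : ℤ) : ℤ) = c j := by omega
    exact_mod_cast this
  have hmem (U : Submodule ℚ V) :
      monomial p (1 : ℂ) - monomial q 1 ∈ torusIdeal g σ U ↔ v ∈ U := by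
    rw [mem_torusIdeal, map_sub, faceMap_monomial, faceMap_monomial, if_pos hp, if_pos hq,
      sub_eq_zero, (AddMonoidAlgebra.single_left_injective one_ne_zero).eq_iff, expDeg_mkQ,
      expDeg_mkQ, ← sub_eq_zero, ← map_sub, hdiff, Submodule.mkQ_apply,
      Submodule.Quotient.mk_eq_zero, Submodule.smul_mem_iff _ hm']
  exact hv ((hmem W).1 (heq ▸ (hmem W').2 hv'))

/-- If the grading of `V ⧸ W` is still positive then the corresponding ideal lies in the ideal of
the origin. -/
lemma constantCoeff_eq_zero_of_mem_torusIdeal (h : V →ₗ[ℚ] ℚ) (hpos : ∀ j, 0 < h (g j))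
    {f : MvPolynomial τ ℂ} (hf : f ∈ torusIdeal g σ (LinearMap.ker h)) :
    constantCoeff f = 0 := by
  classical
  rw [mem_torusIdeal] at hf
  have h1 := congrArg (fun z ↦ z.coeff 0) hf
  rw [f.as_sum] at h1
  simp only [coeff_faceMap] at h1
  have hdeg (u : τ →₀ ℕ) : expDeg ((LinearMap.ker h).mkQ ∘ g) u = 0 ↔ u = 0 := by
    rw [expDeg_mkQ, Submodule.mkQ_apply, Submodule.Quotient.mk_eq_zero, LinearMap.mem_ker]
    constructor
    · intro h0
      rw [expDeg, map_sum, Finset.sum_eq_zero_iff_of_nonneg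
        (fun j _ ↦ by rw [map_nsmul]; exact nsmul_nonneg (hpos j).le _)] at h0
      ext j
      have := h0 j (Finset.mem_univ j)
      rw [map_nsmul, smul_eq_zero] at this
      exact this.resolve_right (hpos j).ne'
    · rintro rfl
      simp [expDeg]
  by_cases h0 : (0 : τ →₀ ℕ) ∈ f.support
  · have h2 : ({u ∈ f.support | (∀ j, j ∉ σ → u j = 0) ∧
        expDeg ((LinearMap.ker h).mkQ ∘ g) u = 0} : Finset _) = {0} := by
      ext u
      simp only [hdeg, Finset.mem_filter, Finset.mem_singleton]
      constructor
      · exact fun h ↦ h.2.2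
      · rintro rfl
        exact ⟨h0, by simp, rfl⟩
    rw [h2, Finset.sum_singleton] at h1
    simpa [constantCoeff_eq] using h1
  · simpa [constantCoeff_eq] using notMem_support_iff.1 h0

omit [Fintype τ] in
lemma X_notMem_torusIdeal (W : Submodule ℚ V) {j : τ} (hj : j ∈ σ) :
    (X j : MvPolynomial τ ℂ) ∉ torusIdeal g σ W := by
  classical
  rw [mem_torusIdeal]
  simp [faceMap, hj]

end Torus

/-! ### The height of the origin -/

section Origin

variable {d n : ℕ} (A : Matrix (Fin d) (Fin n) ℤ) (L : Fin n → ℚ)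

/-- The degrees of `x_j` and `∂_j` in the character group of the torus acting on the product of an
affine space with coordinates `x_j` and the toric variety of `A`. -/
def bigDeg : Fin n ⊕ Fin n → (Fin d → ℚ) × (Fin n → ℚ) :=
  Sum.elim (fun j ↦ (0, Pi.single j 1)) fun j ↦ (fun i ↦ (A i j : ℚ), 0)

/-- All the variables `x_j`, together with those `∂_j` for which `c (a_j) ≤ L j` is tight. -/
def tightVars (c : (Fin d → ℚ) →ₗ[ℚ] ℚ) : Set (Fin n ⊕ Fin n) :=
  {t | Sum.elim (fun _ ↦ True) (fun j ↦ c (fun i ↦ (A i j : ℚ)) = L j) t}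

variable {A L}

lemma faceMap_eq_zero_of_mem_toricIdeal {f : MvPolynomial (Fin n) ℂ} (hf : f ∈ toricIdeal A) :
    faceMap (bigDeg A ∘ Sum.inr) Set.univ f = 0 := by
  classical
  suffices toricIdeal A ≤ RingHom.ker (faceMap (bigDeg A ∘ Sum.inr) Set.univ) from
    RingHom.mem_ker.1 (this hf)
  refine Ideal.span_le.2 ?_
  rintro _ ⟨u, v, huv, rfl⟩
  have hdeg (w : Fin n →₀ ℕ) : expDeg (bigDeg A ∘ Sum.inr) w =
      (fun i ↦ ((A.mulVec fun j ↦ (w j : ℤ)) i : ℚ), 0) := by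
    refine Prod.ext (funext fun i ↦ ?_) ?_
    · simp [expDeg, bigDeg, Prod.fst_sum, Matrix.mulVec, dotProduct, mul_comm]
    · simp [expDeg, bigDeg, Prod.snd_sum]
  change faceMap _ _ _ = 0
  rw [map_sub, faceMap_monomial, faceMap_monomial, if_pos (by simp), if_pos (by simp), hdeg, hdeg,
    huv, sub_self]

lemma grIdealXD_le_torusIdeal {c : (Fin d → ℚ) →ₗ[ℚ] ℚ}
    (hc : ∀ j, c (fun i ↦ (A i j : ℚ)) ≤ L j)
    (W : Submodule ℚ ((Fin d → ℚ) × (Fin n → ℚ))) :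
    grIdealXD A L ≤ torusIdeal (bigDeg A) (tightVars A L c) W := by
  classical
  rw [grIdealXD, Ideal.map_le_iff_le_comap, initialIdeal, Ideal.span_le]
  rintro _ ⟨f, hf, -, rfl⟩
  refine mem_torusIdeal_of_faceMap_eq_zero _ _ W ?_
  have := faceMap_initialForm (bigDeg A ∘ Sum.inr) L (c.comp (LinearMap.fst ℚ _ _)) hc
    (faceMap_eq_zero_of_mem_toricIdeal hf)
  rw [faceMap, aeval_rename]
  rw [faceMap] at this
  convert this using 2
  congr 1

lemma span_bigDeg {c : (Fin d → ℚ) →ₗ[ℚ] ℚ}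
    (hspan : Submodule.span ℚ ((fun j i ↦ (A i j : ℚ)) '' {j | c (fun i ↦ (A i j : ℚ)) = L j}) = ⊤) :
    Submodule.span ℚ (bigDeg A '' tightVars A L c) = ⊤ := by
  rw [eq_top_iff, ← LinearMap.sup_range_inl_inr, sup_le_iff, LinearMap.range_eq_map,
    LinearMap.range_eq_map, ← hspan, ← (Pi.basisFun ℚ (Fin n)).span_eq, Submodule.map_span,
    Submodule.map_span]
  refine ⟨Submodule.span_mono ?_, Submodule.span_mono ?_⟩
  · rintro _ ⟨_, ⟨j, hj, rfl⟩, rfl⟩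
    exact ⟨Sum.inr j, hj, rfl⟩
  · rintro _ ⟨_, ⟨j, rfl⟩, rfl⟩
    exact ⟨Sum.inl j, trivial, by simp [bigDeg]⟩

/-- The functional on `ℚ^d × ℚ^n` given by `h` on the first factor and the coordinate sum on the
second. -/
def bigFunctional (h : (Fin d → ℚ) →ₗ[ℚ] ℚ) : (Fin d → ℚ) × (Fin n → ℚ) →ₗ[ℚ] ℚ :=
  h.coprod (∑ j, LinearMap.proj j)

lemma bigFunctional_pos {h : (Fin d → ℚ) →ₗ[ℚ] ℚ} (hh : ∀ j, 0 < h (fun i ↦ (A i j : ℚ))) (t) :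
    0 < bigFunctional h (bigDeg A t) := by
  rcases t with j | j
  · simp [bigFunctional, bigDeg]
  · simpa [bigFunctional, bigDeg] using hh j

variable (A L)

/-- The rational functional attached to an integral one is positive on the columns. -/
lemma exists_pos_functional {h : Fin d → ℤ} (hh : ∀ j, 0 < ∑ i, h i * A i j) :
    ∃ h' : (Fin d → ℚ) →ₗ[ℚ] ℚ, ∀ j, 0 < h' (fun i ↦ (A i j : ℚ)) := by
  refine ⟨∑ i, (h i : ℚ) • LinearMap.proj i, fun j ↦ ?_⟩
  have : ((0 : ℤ) : ℚ) < ((∑ i, h i * A i j : ℤ) : ℚ) := by exact_mod_cast hh j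
  simpa using this

/-- The existence of a vertex, applied to the columns of `A`. -/
lemma exists_tight (hspan : Submodule.span ℚ (Set.range fun j i ↦ (A i j : ℚ)) = ⊤)
    {h : (Fin d → ℚ) →ₗ[ℚ] ℚ} (hh : ∀ j, 0 < h (fun i ↦ (A i j : ℚ))) :
    ∃ c : (Fin d → ℚ) →ₗ[ℚ] ℚ, (∀ j, c (fun i ↦ (A i j : ℚ)) ≤ L j) ∧
      Submodule.span ℚ (bigDeg A '' tightVars A L c) = ⊤ := by
  obtain ⟨c, hc, hs⟩ := exists_vertex (fun j i ↦ (A i j : ℚ)) hspan h hh L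
  exact ⟨c, hc, span_bigDeg hs⟩

/-- The ideal of the origin in `ℂ[x,∂]/in_L(I_A)`. -/
def originIdeal (hJ : ∀ f ∈ grIdealXD A L, constantCoeff f = 0) :
    Ideal (MvPolynomial (Fin n ⊕ Fin n) ℂ ⧸ grIdealXD A L) :=
  RingHom.ker (Ideal.Quotient.lift (grIdealXD A L) constantCoeff hJ)

instance (hJ : ∀ f ∈ grIdealXD A L, constantCoeff f = 0) : (originIdeal A L hJ).IsPrime :=
  RingHom.ker_isPrime _

lemma mk_mem_originIdeal (hJ : ∀ f ∈ grIdealXD A L, constantCoeff f = 0)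
    (f : MvPolynomial (Fin n ⊕ Fin n) ℂ) :
    Ideal.Quotient.mk (grIdealXD A L) f ∈ originIdeal A L hJ ↔ constantCoeff f = 0 := by
  rw [originIdeal, RingHom.mem_ker, Ideal.Quotient.lift_mk]

/-- The origin has height at least `n + d`: the subspaces of the hyperplane `h̃ = 0` of
`ℚ^d × ℚ^n` give a chain of `n + d` torus-invariant primes strictly contained in its ideal. -/
lemma le_height_originIdeal (hdn : d ≤ n) (hJ : ∀ f ∈ grIdealXD A L, constantCoeff f = 0)
    {c h : (Fin d → ℚ) →ₗ[ℚ] ℚ} (hc : ∀ j, c (fun i ↦ (A i j : ℚ)) ≤ L j)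
    (hspan : Submodule.span ℚ (bigDeg A '' tightVars A L c) = ⊤)
    (hh : ∀ j, 0 < h (fun i ↦ (A i j : ℚ))) :
    ((n + d : ℕ) : ℕ∞) ≤ (originIdeal A L hJ).height := by
  rcases Nat.eq_zero_or_pos n with hn | hn
  · have : n + d = 0 := by omega
    simp [this]
  let F (W : Submodule ℚ ((Fin d → ℚ) × (Fin n → ℚ))) :
      PrimeSpectrum (MvPolynomial (Fin n ⊕ Fin n) ℂ ⧸ grIdealXD A L) :=
    ⟨(torusIdeal (bigDeg A) (tightVars A L c) W).map (Ideal.Quotient.mk _),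
      Ideal.map_isPrime_of_surjective Ideal.Quotient.mk_surjective
        (by rw [Ideal.mk_ker]; exact grIdealXD_le_torusIdeal hc W)⟩
  have hcomap (W) : (F W).asIdeal.comap (Ideal.Quotient.mk _) =
      torusIdeal (bigDeg A) (tightVars A L c) W := by
    rw [Ideal.comap_map_of_surjective' _ Ideal.Quotient.mk_surjective, Ideal.mk_ker]
    exact sup_eq_left.2 (grIdealXD_le_torusIdeal hc W)
  have hF : StrictMono F := by
    intro W W' hW
    have h1 := torusIdeal_strictMono (bigDeg A) (tightVars A L c) hspan hW
    rw [← hcomap, ← hcomap] at h1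
    change (F W).asIdeal < (F W').asIdeal
    refine lt_of_le_of_ne ((Ideal.comap_le_comap_iff_of_surjective _
      Ideal.Quotient.mk_surjective _ _).1 h1.le) fun heq ↦ h1.ne (by rw [heq])
  set K := LinearMap.ker (bigFunctional (n := n) h) with hK
  have hlt : F K < ⟨originIdeal A L hJ, inferInstance⟩ := by
    refine lt_of_le_of_ne ?_ fun heq ↦ ?_
    · refine Ideal.map_le_iff_le_comap.2 fun f hf ↦ ?_
      rw [Ideal.mem_comap, mk_mem_originIdeal]
      exact constantCoeff_eq_zero_of_mem_torusIdeal _ _ _ (bigFunctional_pos hh) hf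
    · refine X_notMem_torusIdeal (bigDeg A) (tightVars A L c) K (j := Sum.inl ⟨0, hn⟩) trivial ?_
      rw [← hcomap, heq, Ideal.mem_comap]
      exact (mk_mem_originIdeal A L hJ _).2 (by simp)
  have h1 := Order.height_add_one_le hlt
  have h2 := Order.height_le_height_apply_of_strictMono F hF K
  rw [← Module.length_submodule, Module.length_eq_finrank] at h2
  have h3 : n + d ≤ Module.finrank ℚ K + 1 := by
    have h4 := LinearMap.finrank_range_add_finrank_ker (bigFunctional (n := n) h)
    have h5 := Submodule.finrank_le (LinearMap.range (bigFunctional (n := n) h))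
    rw [← hK] at h4
    simp only [Module.finrank_prod, Module.finrank_fin_fun, Module.finrank_self] at h4 h5
    omega
  calc ((n + d : ℕ) : ℕ∞) ≤ ((Module.finrank ℚ K + 1 : ℕ) : ℕ∞) := by exact_mod_cast h3
    _ ≤ Order.height (F K) + 1 := by push_cast; gcongr
    _ ≤ _ := h1
    _ = _ := (PrimeSpectrum.height_eq_orderHeight _).symm

/-- Every point of the local scheme at the origin on which the Euler operators vanish has dimension
at most `n`. -/
lemma coheight_le_of_euler_mem
    (m : Ideal (MvPolynomial (Fin n ⊕ Fin n) ℂ ⧸ grIdealXD A L)) [m.IsPrime]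
    (q : PrimeSpectrum (Localization.AtPrime m))
    (hq : ∀ i, algebraMap _ (Localization.AtPrime m)
      (Ideal.Quotient.mk (grIdealXD A L) (eulerXD A i)) ∈ q.asIdeal) :
    Order.coheight q ≤ n := by
  have h1 : StrictMono (PrimeSpectrum.comap (algebraMap
      (MvPolynomial (Fin n ⊕ Fin n) ℂ ⧸ grIdealXD A L) (Localization.AtPrime m))) :=
    Monotone.strictMono_of_injective (fun p q h ↦ Ideal.comap_mono h)
      (PrimeSpectrum.localization_comap_injective _ m.primeCompl)
  have h2 := (RingHom.strictMono_comap_of_surjective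
    (Ideal.Quotient.mk_surjective (I := grIdealXD A L))).comp h1
  refine (Order.coheight_le_coheight_apply_of_strictMono _ h2 q).trans ?_
  set Q := (PrimeSpectrum.comap (Ideal.Quotient.mk (grIdealXD A L)) ∘
    PrimeSpectrum.comap (algebraMap _ (Localization.AtPrime m))) q
  have h3 : ringKrullDim (_ ⧸ Q.asIdeal) ≤ n := by
    refine ringKrullDim_quotient_le_of_euler A L Q.asIdeal (fun f hf ↦ ?_) hq
    change algebraMap _ (Localization.AtPrime m) (Ideal.Quotient.mk (grIdealXD A L) f) ∈ q.asIdeal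
    rw [Ideal.Quotient.eq_zero_iff_mem.2 hf, map_zero]
    exact Ideal.zero_mem _
  rw [← coheight_eq_ringKrullDim_quotient] at h3
  exact_mod_cast h3

end Origin

/-! ### Regularity of the Euler operators -/

/-- If `ℂ[x,∂]/in_L(I_A)ℂ[x,∂]` is Cohen–Macaulay then the Euler operators form a
regular sequence on it. -/
theorem stmt5 {d n : ℕ} (A : Matrix (Fin d) (Fin n) ℤ)
    (hrank : A.rank = d)
    (hcols : ∀ j, (fun i => A i j) ≠ 0)
    (hpointed : IsPointed A)
    (hZA : AddSubgroup.closure (cols A) = ⊤)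
    (L : Fin n → ℚ)
    (hCM : IsCohenMacaulayRing (MvPolynomial (Fin n ⊕ Fin n) ℂ ⧸ grIdealXD A L)) :
    RingTheory.Sequence.IsRegular
      (MvPolynomial (Fin n ⊕ Fin n) ℂ ⧸ grIdealXD A L)
      (List.ofFn fun i => Ideal.Quotient.mk (grIdealXD A L) (eulerXD A i)) := by
  have hdn : d ≤ n := hrank ▸ A.rank_le_width
  obtain ⟨h, hh⟩ := exists_pos_grading A hcols hpointed
  obtain ⟨h', hh'⟩ := exists_pos_functional A hh
  obtain ⟨c, hc, hspan⟩ := exists_tight A L (span_cols_eq_top A hZA) hh'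
  have hJ (f) (hf : f ∈ grIdealXD A L) : constantCoeff f = 0 :=
    constantCoeff_eq_zero_of_mem_torusIdeal _ _ _ (bigFunctional_pos hh')
      (grIdealXD_le_torusIdeal hc _ hf)
  have hE (i) : constantCoeff (eulerXD A i) = 0 := by simp [eulerXD]
  set m := originIdeal A L hJ with hm
  -- the depth of the local ring at the origin is at least `n + d`
  have hdepth : ((n + d : ℕ) : ℕ∞) ≤ ringDepth (Localization.AtPrime m) := by
    have h1 := hCM m
    rw [IsLocalization.AtPrime.ringKrullDim_eq_height m] at h1
    rw [WithBot.coe_inj.1 h1]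
    exact le_height_originIdeal A L hdn hJ hc hspan hh'
  have hlist : (List.ofFn fun i ↦ Ideal.Quotient.mk (grIdealXD A L) (eulerXD A i)) =
      (List.ofFn (eulerXD A)).map (Ideal.Quotient.mk (grIdealXD A L)) := by
    rw [List.map_ofFn]; rfl
  have hlocal : RingTheory.Sequence.IsWeaklyRegular (Localization.AtPrime m)
      (((List.ofFn (eulerXD A)).map (Ideal.Quotient.mk (grIdealXD A L))).map
        (algebraMap _ (Localization.AtPrime m))) := by
    refine isWeaklyRegular_of_ringDepth n _ (fun r hr ↦ ?_) (by simpa using hdepth) fun q hq ↦ ?_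
    · simp only [List.mem_map, List.mem_ofFn, exists_exists_eq_and] at hr
      obtain ⟨i, rfl⟩ := hr
      rw [← IsLocalization.AtPrime.map_eq_maximalIdeal m]
      exact Ideal.mem_map_of_mem _ ((mk_mem_originIdeal A L hJ _).2 (hE i))
    · refine coheight_le_of_euler_mem A L m q fun i ↦ hq _ ?_
      simp
  -- the grading with `deg ∂_j = h · a_j` and `deg x_j + deg ∂_j` constant
  let N : ℕ := 1 + ∑ j, (∑ i, h i * A i j).toNat
  have hN (j) : (∑ i, h i * A i j).toNat < N := by
    have : (∑ i, h i * A i j).toNat ≤ ∑ j, (∑ i, h i * A i j).toNat :=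
      Finset.single_le_sum (f := fun j ↦ (∑ i, h i * A i j).toNat) (fun _ _ ↦ Nat.zero_le _)
        (Finset.mem_univ j)
    omega
  let ω : Fin n ⊕ Fin n → ℕ := Sum.elim (fun j ↦ N - (∑ i, h i * A i j).toNat)
    fun j ↦ (∑ i, h i * A i j).toNat
  refine ⟨?_, fun htop ↦ ?_⟩
  · rw [hlist]
    refine isWeaklyRegular_quotient_of_localization ω ?_
      (grIdealXD_isHomogeneous A L (h := h) fun j ↦ Int.toNat_of_nonneg (hh j).le) _ ?_ m
      (fun s hs h0 ↦ hs ((mk_mem_originIdeal A L hJ s).2 h0)) hlocal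
    · rintro (j | j)
      · exact (Nat.sub_pos_of_lt (hN j)).ne'
      · have := hh j
        change (∑ i, h i * A i j).toNat ≠ 0
        omega
    · intro e he
      obtain ⟨i, rfl⟩ := List.mem_ofFn.1 he
      exact ⟨N, eulerXD_mem_weightedHomogeneousSubmodule A
        (fun j ↦ Nat.sub_add_cancel (hN j).le) i⟩
  · rw [smul_eq_mul, Ideal.mul_top] at htop
    refine Ideal.IsPrime.ne_top (inferInstance : m.IsPrime) (top_le_iff.1 (htop.le.trans ?_))
    refine Ideal.span_le.2 fun r hr ↦ ?_
    obtain ⟨i, rfl⟩ := List.mem_ofFn.1 hr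
    exact (mk_mem_originIdeal A L hJ _).2 (hE i)

end
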